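/- arXiv:1512.01160 — 4 statements merged into one kernel-verified Lean document; each statement's English description precedes it below -/
import Mathlib

section
/- Let 0 ≤ β < 1. The constant K₂(β) is sharp in the interpolation inequality: for every K < K₂(β) there exists a real-valued C¹ 2π-periodic function u on ℝ with ∫_0^{2π} u(x) dx = 0 and max_x u(x)² > K · ( ∫_0^{2π} ( u'(x)² − β u(x)² ) dx )^{1/2} · ( ∫_0^{2π} u(x)² dx )^{1/2}. -/
open Real MeasureTheory

/-- The sharp constant `K₂(β) = sup_{λ>0} (√λ/π) · ∑_{k ∈ ℤ, k ≠ 0} 1/(k² − β + λ)`. -/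
noncomputable def K2 (β : ℝ) : ℝ :=
  ⨆ l : Set.Ioi (0 : ℝ),
    Real.sqrt l / π * ∑' k : {k : ℤ // k ≠ 0}, 1 / ((k.1 : ℝ) ^ 2 - β + l)

/-!
For `l > 0`, let `G` be the Green's function of `-d²/dx² - β + l` on mean-zero `2π`-periodic
functions, normalized to have cosine coefficients `1 / (n² - β + l)`. Pairing its equation with `G`
gives `∫ (G'² - β G²) + l ∫ G² = π G(0)`, and this identity survives truncation of the Fourier
series. By the arithmetic-geometric mean inequality, `2 √l √(∫ (G'² - β G²)) √(∫ G²) ≤ π G(0)`, so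
the quotient in the interpolation inequality is at least `(2 √l / π) G(0)`. As the truncation is
removed, this converges to the expression under the supremum in `K2 β`.
-/

open Filter

theorem integral_cos_int_mul (k : ℤ) :
    ∫ x in (0 : ℝ)..(2 * π), cos (k * x) = if k = 0 then 2 * π else 0 := by
  split_ifs with hk
  · simp [hk]
  · have sin_period : sin (k * (2 * π)) = 0 := by
      simpa [mul_assoc] using sin_periodic.int_mul_eq k
    rw [intervalIntegral.integral_comp_mul_left cos (Int.cast_ne_zero.mpr hk), integral_cos,
      sin_period]
    simp

theorem integral_cos_int_mul_mul_cos_int_mul {m n : ℤ} (h : m + n ≠ 0) :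
    ∫ x in (0 : ℝ)..(2 * π), cos (m * x) * cos (n * x) = if m = n then π else 0 := by
  have product_to_sum (x : ℝ) : cos (m * x) * cos (n * x) =
      (cos ((m - n : ℤ) * x) + cos ((m + n : ℤ) * x)) / 2 := by
    push_cast
    rw [sub_mul, add_mul, ← two_mul_cos_mul_cos]
    ring
  simp_rw [product_to_sum]
  rw [intervalIntegral.integral_div, intervalIntegral.integral_add
    (Continuous.intervalIntegrable (by fun_prop) _ _)
    (Continuous.intervalIntegrable (by fun_prop) _ _)]
  simp only [integral_cos_int_mul, sub_eq_zero, h, if_false]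
  split_ifs <;> ring

theorem integral_sin_int_mul_mul_sin_int_mul {m n : ℤ} (h : m + n ≠ 0) :
    ∫ x in (0 : ℝ)..(2 * π), sin (m * x) * sin (n * x) = if m = n then π else 0 := by
  have product_to_sum (x : ℝ) : sin (m * x) * sin (n * x) =
      (cos ((m - n : ℤ) * x) - cos ((m + n : ℤ) * x)) / 2 := by
    push_cast
    rw [sub_mul, add_mul, ← two_mul_sin_mul_sin]
    ring
  simp_rw [product_to_sum]
  rw [intervalIntegral.integral_div, intervalIntegral.integral_sub
    (Continuous.intervalIntegrable (by fun_prop) _ _)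
    (Continuous.intervalIntegrable (by fun_prop) _ _)]
  simp only [integral_cos_int_mul, sub_eq_zero, h, if_false]
  split_ifs <;> ring

theorem integral_sq_sum_of_orthogonal {ι : Type*} [DecidableEq ι] {f : ι → ℝ → ℝ} {a b c : ℝ}
    (hf : ∀ i, Continuous (f i))
    (orthogonal : ∀ i j, ∫ x in a..b, f i x * f j x = if i = j then c else 0)
    (s : Finset ι) (w : ι → ℝ) :
    ∫ x in a..b, (∑ i ∈ s, w i * f i x) ^ 2 = c * ∑ i ∈ s, w i ^ 2 := by
  have expand (x : ℝ) : (∑ i ∈ s, w i * f i x) ^ 2 =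
      ∑ i ∈ s, ∑ j ∈ s, w i * w j * (f i x * f j x) := by
    simp only [sq, Finset.sum_mul_sum, mul_mul_mul_comm]
  calc ∫ x in a..b, (∑ i ∈ s, w i * f i x) ^ 2
      = ∑ i ∈ s, ∑ j ∈ s, w i * w j * ∫ x in a..b, f i x * f j x := by
        simp_rw [expand]
        rw [intervalIntegral.integral_finsetSum
          fun i _ => Continuous.intervalIntegrable (by fun_prop) _ _]
        refine Finset.sum_congr rfl fun i _ => ?_
        rw [intervalIntegral.integral_finsetSum
          fun j _ => Continuous.intervalIntegrable (by fun_prop) _ _]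
        simp only [intervalIntegral.integral_const_mul]
    _ = ∑ i ∈ s, w i * w i * c := by
        refine Finset.sum_congr rfl fun i hi => ?_
        simp only [orthogonal, mul_ite, mul_zero, Finset.sum_ite_eq, hi, if_true]
    _ = c * ∑ i ∈ s, w i ^ 2 := by
        rw [← Finset.sum_mul, mul_comm]
        simp only [sq]

theorem two_mul_sqrt_mul_sqrt_mul_sqrt_le {l A B : ℝ} (hl : 0 ≤ l) (hA : 0 ≤ A) (hB : 0 ≤ B) :
    2 * √l * (√A * √B) ≤ A + l * B := by
  calc 2 * √l * (√A * √B) = 2 * √A * (√l * √B) := by ring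
    _ ≤ √A ^ 2 + (√l * √B) ^ 2 := two_mul_le_add_sq _ _
    _ = A + l * B := by rw [mul_pow, sq_sqrt hA, sq_sqrt hl, sq_sqrt hB]

/-- The cosine polynomial `∑ n ∈ s, a n * cos (n x)`. Frequencies are positive, so that it has mean
zero and distinct terms are orthogonal. -/
noncomputable def cosSum (s : Finset ℕ+) (a : ℕ+ → ℝ) (x : ℝ) : ℝ :=
  ∑ n ∈ s, a n * cos (n * x)

namespace cosSum

variable (s : Finset ℕ+) (a : ℕ+ → ℝ)

theorem contDiff {r : WithTop ℕ∞} : ContDiff ℝ r (cosSum s a) :=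
  ContDiff.sum fun n _ => by fun_prop

theorem periodic : Function.Periodic (cosSum s a) (2 * π) := fun x =>
  Finset.sum_congr rfl fun n _ => by rw [mul_add, cos_add_nat_mul_two_pi]

theorem apply_zero : cosSum s a 0 = ∑ n ∈ s, a n := by
  simp [cosSum]

theorem integral_eq_zero : ∫ x in (0 : ℝ)..(2 * π), cosSum s a x = 0 := by
  unfold cosSum
  rw [intervalIntegral.integral_finsetSum
    fun n _ => Continuous.intervalIntegrable (by fun_prop) _ _]
  refine Finset.sum_eq_zero fun n _ => ?_
  have integral_cos_eq_zero : ∫ x in (0 : ℝ)..(2 * π), cos (n * x) = 0 := by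
    simpa using integral_cos_int_mul n
  rw [intervalIntegral.integral_const_mul, integral_cos_eq_zero, mul_zero]

theorem deriv_apply (x : ℝ) :
    deriv (cosSum s a) x = ∑ n ∈ s, -(n * a n) * sin (n * x) := by
  refine (HasDerivAt.fun_sum fun n _ => ?_).deriv
  exact (((hasDerivAt_id' x).const_mul (n : ℝ)).cos.const_mul (a n)).congr_deriv (by ring)

theorem integral_sq :
    ∫ x in (0 : ℝ)..(2 * π), cosSum s a x ^ 2 = π * ∑ n ∈ s, a n ^ 2 := by
  refine integral_sq_sum_of_orthogonal (fun n => by fun_prop) (fun m n => ?_) s a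
  simpa using integral_cos_int_mul_mul_cos_int_mul (m := m) (n := n) (by positivity)

theorem integral_deriv_sq :
    ∫ x in (0 : ℝ)..(2 * π), deriv (cosSum s a) x ^ 2 = π * ∑ n ∈ s, (n * a n) ^ 2 := by
  simp_rw [deriv_apply, ← neg_sq (_ * a _)]
  refine integral_sq_sum_of_orthogonal (fun n => by fun_prop) (fun m n => ?_) s _
  simpa using integral_sin_int_mul_mul_sin_int_mul (m := m) (n := n) (by positivity)

theorem integral_deriv_sq_sub_mul_sq (β : ℝ) :
    ∫ x in (0 : ℝ)..(2 * π), (deriv (cosSum s a) x ^ 2 - β * cosSum s a x ^ 2) =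
      π * ∑ n ∈ s, ((n : ℝ) ^ 2 - β) * a n ^ 2 := by
  have continuous_deriv : Continuous (deriv (cosSum s a)) :=
    (contDiff s a (r := 1)).continuous_deriv le_rfl
  have continuous_cosSum : Continuous (cosSum s a) := (contDiff s a (r := 0)).continuous
  rw [intervalIntegral.integral_sub (Continuous.intervalIntegrable (by fun_prop) _ _)
    (Continuous.intervalIntegrable (by fun_prop) _ _), intervalIntegral.integral_const_mul,
    integral_sq, integral_deriv_sq]
  simp only [sub_mul, mul_pow, Finset.sum_sub_distrib, ← Finset.mul_sum]
  ring

theorem integral_deriv_sq_sub_mul_sq_nonneg {β : ℝ} (hβ : β ≤ 1) :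
    0 ≤ ∫ x in (0 : ℝ)..(2 * π), (deriv (cosSum s a) x ^ 2 - β * cosSum s a x ^ 2) := by
  rw [integral_deriv_sq_sub_mul_sq]
  refine mul_nonneg pi_nonneg (Finset.sum_nonneg fun n _ => ?_)
  have one_le_sq : (1 : ℝ) ≤ (n : ℝ) ^ 2 := one_le_pow₀ (mod_cast n.pos)
  exact mul_nonneg (by linarith) (sq_nonneg _)

end cosSum

theorem tsum_ne_zero_eq_two_nsmul_tsum_pnat {G : Type*} [AddCommGroup G] [UniformSpace G]
    [IsUniformAddGroup G] [CompleteSpace G] [T2Space G] {f : ℤ → G} (even : f.Even)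
    (summable : Summable f) :
    ∑' k : {k : ℤ // k ≠ 0}, f k = 2 • ∑' n : ℕ+, f n := by
  set g : ℤ → G := Set.indicator {k | k ≠ 0} f
  have g_even : g.Even := fun k => by simp [g, Set.indicator_apply, even k]
  calc ∑' k : {k : ℤ // k ≠ 0}, f k = ∑' k, g k := tsum_subtype {k | k ≠ 0} f
    _ = g 0 + 2 • ∑' n : ℕ+, g n :=
      tsum_int_eq_zero_add_two_mul_tsum_pnat g_even (summable.indicator _)
    _ = 2 • ∑' n : ℕ+, f n := by simp [g]

/-- The Fourier multiplier of `(-d²/dx² - β + l)⁻¹` at frequency `k`, up to normalization the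
`k`-th Fourier coefficient of the corresponding Green's function. -/
noncomputable def greenCoeff (β l : ℝ) (k : ℤ) : ℝ :=
  1 / ((k : ℝ) ^ 2 - β + l)

namespace greenCoeff

variable {β l : ℝ}

theorem denom_pos (h : β < 1 + l) {k : ℤ} (hk : k ≠ 0) : 0 < (k : ℝ) ^ 2 - β + l := by
  have one_le_sq : (1 : ℝ) ≤ (k : ℝ) ^ 2 := mod_cast Int.add_one_le_of_lt (sq_pos_of_ne_zero hk)
  linarith

theorem pos (h : β < 1 + l) {k : ℤ} (hk : k ≠ 0) : 0 < greenCoeff β l k :=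
  one_div_pos.mpr (denom_pos h hk)

theorem even (β l : ℝ) : Function.Even (greenCoeff β l) := fun k => by
  simp [greenCoeff]

theorem summable (β l : ℝ) : Summable (greenCoeff β l) := by
  have tendsto_sq : Tendsto (fun k : ℤ => (k : ℝ) ^ 2) cofinite atTop := by
    simpa [Function.comp_def] using (tendsto_pow_atTop two_ne_zero).comp
      ((tendsto_norm_cocompact_atTop (E := ℝ)).comp Int.tendsto_coe_cofinite)
  refine Summable.of_norm_bounded_eventually
    ((summable_one_div_int_pow.mpr one_lt_two).mul_left (2 : ℝ)) ?_
  filter_upwards [tendsto_sq.eventually_gt_atTop 0, tendsto_sq.eventually_ge_atTop (2 * (β - l))]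
    with k sq_pos sq_ge
  have denom_ge : (k : ℝ) ^ 2 / 2 ≤ (k : ℝ) ^ 2 - β + l := by linarith
  rw [greenCoeff, norm_of_nonneg (one_div_nonneg.mpr (by linarith)), mul_one_div,
    ← one_div_div _ (2 : ℝ)]
  exact one_div_le_one_div_of_le (by positivity) denom_ge

theorem exists_finset_lt_mul_two_mul_sum {K c : ℝ}
    (hK : K < c * ∑' k : {k : ℤ // k ≠ 0}, greenCoeff β l k) :
    ∃ s : Finset ℕ+, s.Nonempty ∧ K < c * (2 * ∑ n ∈ s, greenCoeff β l n) := by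
  have summable_pnat : Summable fun n : ℕ+ => greenCoeff β l n :=
    (summable β l).comp_injective (Nat.cast_injective.comp PNat.coe_injective)
  rw [tsum_ne_zero_eq_two_nsmul_tsum_pnat (even β l) (summable β l), nsmul_eq_mul] at hK
  have tendsto_partial_sums : Tendsto (fun s : Finset ℕ+ => c * (2 * ∑ n ∈ s, greenCoeff β l n))
      atTop (nhds (c * (2 * ∑' n : ℕ+, greenCoeff β l n))) :=
    (summable_pnat.hasSum.const_mul 2).const_mul c
  obtain ⟨s, K_lt, subset⟩ := ((tendsto_partial_sums.eventually_const_lt (mod_cast hK)).and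
    (eventually_ge_atTop {1})).exists
  exact ⟨s, (Finset.singleton_nonempty 1).mono subset, K_lt⟩

end greenCoeff

/-- The truncation to the frequencies in `s` of the Green's function of `-d²/dx² - β + l` on
mean-zero `2π`-periodic functions, normalized to have cosine coefficients `greenCoeff β l n`. -/
noncomputable def greenSum (β l : ℝ) (s : Finset ℕ+) : ℝ → ℝ :=
  cosSum s fun n => greenCoeff β l n

namespace greenSum

variable {β l : ℝ} {s : Finset ℕ+}

theorem apply_zero_pos (h : β < 1 + l) (hs : s.Nonempty) : 0 < greenSum β l s 0 := by
  rw [greenSum, cosSum.apply_zero]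
  exact Finset.sum_pos (fun n _ => greenCoeff.pos h (by positivity)) hs

theorem energy_add_mul_integral_sq (h : β < 1 + l) :
    (∫ x in (0 : ℝ)..(2 * π), (deriv (greenSum β l s) x ^ 2 - β * greenSum β l s x ^ 2)) +
      l * ∫ x in (0 : ℝ)..(2 * π), greenSum β l s x ^ 2 = π * greenSum β l s 0 := by
  simp only [greenSum, cosSum.integral_deriv_sq_sub_mul_sq, cosSum.integral_sq, cosSum.apply_zero]
  rw [mul_left_comm, ← mul_add, Finset.mul_sum, ← Finset.sum_add_distrib]
  congr 1
  refine Finset.sum_congr rfl fun n _ => ?_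
  have denom_ne_zero : (n : ℝ) ^ 2 - β + l ≠ 0 := by
    simpa using (greenCoeff.denom_pos h (k := n) (by positivity)).ne'
  simp only [greenCoeff, Int.cast_natCast]
  field_simp

theorem two_mul_sqrt_mul_sqrt_energy_mul_sqrt_integral_sq_le (hβ : β ≤ 1) (hl : 0 < l) :
    2 * √l * (√(∫ x in (0 : ℝ)..(2 * π),
        (deriv (greenSum β l s) x ^ 2 - β * greenSum β l s x ^ 2)) *
      √(∫ x in (0 : ℝ)..(2 * π), greenSum β l s x ^ 2)) ≤ π * greenSum β l s 0 := by
  rw [← energy_add_mul_integral_sq (by linarith)]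
  exact two_mul_sqrt_mul_sqrt_mul_sqrt_le hl.le
    (cosSum.integral_deriv_sq_sub_mul_sq_nonneg s _ hβ)
    (intervalIntegral.integral_nonneg two_pi_pos.le fun x _ => sq_nonneg _)

end greenSum

theorem mul_lt_sq_of_lt_div_mul_of_mul_le {K r c P S : ℝ} (hc : 0 < c) (hP : 0 ≤ P) (hS : 0 < S)
    (hK : K < r / c * S) (h : r * P ≤ c * S) : K * P < S ^ 2 := by
  rcases hP.eq_or_lt with rfl | P_pos
  · simpa using pow_pos hS 2
  · calc K * P < r / c * S * P := mul_lt_mul_of_pos_right hK P_pos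
      _ = S / c * (r * P) := by ring
      _ ≤ S / c * (c * S) := mul_le_mul_of_nonneg_left h (by positivity)
      _ = S ^ 2 := by field_simp

theorem stmt_8_general (β : ℝ) (hβ1 : β < 1) (K : ℝ) (hK : K < K2 β) :
    ∃ u : ℝ → ℝ, ContDiff ℝ 1 u ∧ Function.Periodic u (2 * π) ∧
      (∫ x in (0:ℝ)..(2 * π), u x) = 0 ∧
      ∃ x : ℝ, u x ^ 2 > K *
        Real.sqrt (∫ x in (0:ℝ)..(2 * π), ((deriv u x) ^ 2 - β * (u x) ^ 2)) *
        Real.sqrt (∫ x in (0:ℝ)..(2 * π), (u x) ^ 2) := by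
  obtain ⟨⟨l, hl : 0 < l⟩, K_lt⟩ := exists_lt_of_lt_ciSup hK
  obtain ⟨s, s_nonempty, K_lt_sum⟩ := greenCoeff.exists_finset_lt_mul_two_mul_sum K_lt
  have K_lt_apply_zero : K < 2 * √l / π * greenSum β l s 0 := by
    rw [greenSum, cosSum.apply_zero]
    exact K_lt_sum.trans_eq (by ring)
  refine ⟨greenSum β l s, cosSum.contDiff s _, cosSum.periodic s _, cosSum.integral_eq_zero s _,
    0, ?_⟩
  rw [gt_iff_lt, mul_assoc]
  exact mul_lt_sq_of_lt_div_mul_of_mul_le pi_pos (by positivity)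
    (greenSum.apply_zero_pos (by linarith) s_nonempty) K_lt_apply_zero
    (greenSum.two_mul_sqrt_mul_sqrt_energy_mul_sqrt_integral_sq_le hβ1.le hl)

theorem stmt_8 (β : ℝ) (hβ0 : 0 ≤ β) (hβ1 : β < 1) (K : ℝ) (hK : K < K2 β) :
    ∃ u : ℝ → ℝ, ContDiff ℝ 1 u ∧ Function.Periodic u (2 * π) ∧
      (∫ x in (0:ℝ)..(2 * π), u x) = 0 ∧
      ∃ x : ℝ, u x ^ 2 > K *
        Real.sqrt (∫ x in (0:ℝ)..(2 * π), ((deriv u x) ^ 2 - β * (u x) ^ 2)) *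
        Real.sqrt (∫ x in (0:ℝ)..(2 * π), (u x) ^ 2) :=
  stmt_8_general β hβ1 K hK
end

section
/- For every β with 0 ≤ β ≤ 0.839 one has sup_{λ>0} (√λ/π) · ∑_{k ∈ ℤ, k ≠ 0} 1/(k² − β + λ) = 1; that is, K₂(β) = 1 for all 0 ≤ β ≤ 0.839 (the paper shows this for all β ≤ β_** = 0.839…). -/
open Real MeasureTheory

/-!
With `c = λ - β` and `S c = ∑_{n ≥ 1} 1 / (n² + c)`, the quantity under the supremum is
`2 √λ S c / π`.

It tends to `1` as `λ → ∞`, because `2 a S (a²) = π coth (π a) - 1 / a`.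

It never exceeds `1`. Since `S` decreases, it suffices to take `β = 0.839`. For large `λ`, the term
`-1 / a` of the `coth` formula outweighs the gain from `√(a² + 0.839) > a`. For small `λ`, the tail
`∑_{n ≥ 2} 1 / (n² + c)` is at most the quadratic in `c` that has the value `3 / 4` of the tail at
`c = -1` and is tangent to it at `c = 0`, where value and slope are given by `ζ(2)` and `ζ(4)`. This
leaves a polynomial inequality in `√λ`.
-/

open Filter Topology

lemma hasSum_ne_zero_of_even {M : Type*} [AddCommMonoid M] [TopologicalSpace M] [ContinuousAdd M]
    {f : ℤ → M} (hf : f.Even) {a : M} (h : HasSum (fun n : ℕ ↦ f (n + 1)) a) :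
    HasSum (fun k : {k : ℤ // k ≠ 0} ↦ f k) (a + a) := by
  refine (hasSum_subtype_iff_indicator (s := {k : ℤ | k ≠ 0})).2 ?_
  have hpos (n : ℕ) : Set.indicator {k : ℤ | k ≠ 0} f (n + 1) = f (n + 1) :=
    Set.indicator_of_mem (by simp only [Set.mem_ofPred_eq]; omega) f
  have hneg (n : ℕ) : Set.indicator {k : ℤ | k ≠ 0} f (-(n + 1)) = f (n + 1) := by
    rw [Set.indicator_of_mem (by simp only [Set.mem_ofPred_eq]; omega), hf]
  simpa using HasSum.of_add_one_of_neg_add_one (f := Set.indicator {k : ℤ | k ≠ 0} f)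
    (by simpa only [hpos] using h) (by simpa only [hneg] using h)

/-- The series `S c = ∑_{n ≥ 1} 1 / (n² + c)`, with index shifted to start at `0`; the sum over
nonzero integers in `K2 β` is `2 S (λ - β)`. The terms are positive for `c > -1`. -/
noncomputable def invSqAddSum (c : ℝ) : ℝ :=
  ∑' n : ℕ, 1 / (((n : ℝ) + 1) ^ 2 + c)

lemma summable_one_div_add_one_sq_add (c : ℝ) :
    Summable fun n : ℕ ↦ 1 / (((n : ℝ) + 1) ^ 2 + c) := by
  have hsq : Summable fun n : ℕ ↦ 2 * (1 / ((n : ℝ) + 1) ^ 2) := by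
    simpa using ((summable_nat_add_iff 1).2 hasSum_zeta_two.summable).mul_left 2
  refine hsq.of_norm_bounded_eventually_nat ?_
  have hlarge : Tendsto (fun n : ℕ ↦ ((n : ℝ) + 1) ^ 2) atTop atTop :=
    (tendsto_pow_atTop two_ne_zero).comp
      (tendsto_atTop_add_const_right _ _ tendsto_natCast_atTop_atTop)
  filter_upwards [hlarge.eventually_ge_atTop (-2 * c)] with n hn
  have hpos : 0 < ((n : ℝ) + 1) ^ 2 := by positivity
  rw [norm_of_nonneg (one_div_nonneg.2 (by linarith)), mul_one_div,
    div_le_div_iff₀ (by linarith) hpos]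
  linarith

lemma tsum_ne_zero_eq_two_mul_invSqAddSum (β l : ℝ) :
    ∑' k : {k : ℤ // k ≠ 0}, 1 / ((k.1 : ℝ) ^ 2 - β + l) = 2 * invSqAddSum (l - β) := by
  have heven : (fun k : ℤ ↦ 1 / ((k : ℝ) ^ 2 + (l - β))).Even := fun k ↦ by simp
  have hsum := hasSum_ne_zero_of_even heven (a := invSqAddSum (l - β))
    (by simpa [invSqAddSum] using (summable_one_div_add_one_sq_add (l - β)).hasSum)
  rw [two_mul, ← hsum.tsum_eq]
  exact tsum_congr fun k ↦ by ring_nf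

lemma antitoneOn_invSqAddSum : AntitoneOn invSqAddSum (Set.Ioi (-1)) := by
  intro c hc d _ hcd
  refine (summable_one_div_add_one_sq_add d).tsum_le_tsum (fun n ↦ ?_)
    (summable_one_div_add_one_sq_add c)
  have hn : 1 ≤ ((n : ℝ) + 1) ^ 2 := one_le_pow₀ (by simp)
  have hc' : -1 < c := hc
  exact one_div_le_one_div_of_le (by linarith) (by linarith)

lemma complex_cot_mul_I (z : ℂ) :
    Complex.cot (z * Complex.I) = -Complex.I * (Complex.cosh z / Complex.sinh z) := by
  rw [Complex.cot, Complex.cos_mul_I, Complex.sin_mul_I, div_mul_eq_div_div, Complex.div_I]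
  ring

lemma one_div_mul_I_sub_add_one_div_mul_I_add {a : ℝ} (ha : a ≠ 0) (x : ℝ) :
    1 / ((a : ℂ) * Complex.I - x) + 1 / ((a : ℂ) * Complex.I + x)
      = -2 * a * Complex.I * ((1 / (x ^ 2 + a ^ 2) : ℝ) : ℂ) := by
  have hsub : (a : ℂ) * Complex.I - x ≠ 0 := fun h ↦ ha (by simpa using congrArg Complex.im h)
  have hadd : (a : ℂ) * Complex.I + x ≠ 0 := fun h ↦ ha (by simpa using congrArg Complex.im h)
  have hfactor : (x : ℂ) ^ 2 + a ^ 2 = -((a * Complex.I - x) * (a * Complex.I + x)) := by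
    linear_combination (a : ℂ) ^ 2 * Complex.I_sq
  push_cast
  rw [hfactor]
  field_simp
  ring

lemma two_mul_mul_invSqAddSum_sq {a : ℝ} (ha : a ≠ 0) :
    2 * a * invSqAddSum (a ^ 2) = π * (cosh (π * a) / sinh (π * a)) - 1 / a := by
  have hz : (a : ℂ) * Complex.I ∈ Complex.integerComplement := by
    rintro ⟨m, hm⟩
    exact ha (by simpa using (congrArg Complex.im hm).symm)
  have hterm (n : ℕ) :
      1 / ((a : ℂ) * Complex.I - (n + 1)) + 1 / ((a : ℂ) * Complex.I + (n + 1))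
        = -2 * a * Complex.I * ((1 / (((n : ℝ) + 1) ^ 2 + a ^ 2) : ℝ) : ℂ) := by
    exact_mod_cast one_div_mul_I_sub_add_one_div_mul_I_add ha (n + 1)
  have hcot : (π : ℂ) * Complex.cot (π * (a * Complex.I))
      = -Complex.I * (π * (cosh (π * a) / sinh (π * a)) : ℝ) := by
    rw [← mul_assoc, complex_cot_mul_I]
    push_cast
    ring
  have hinv : 1 / ((a : ℂ) * Complex.I) = -Complex.I * (1 / a : ℝ) := by
    push_cast
    rw [div_mul_eq_div_div, Complex.div_I]
    ring
  have hseries := cot_series_rep' hz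
  rw [tsum_congr hterm, tsum_mul_left, ← Complex.ofReal_tsum, ← invSqAddSum, hcot, hinv]
    at hseries
  have him := congrArg Complex.im hseries
  simp only [Complex.sub_im, Complex.mul_im, Complex.mul_re, Complex.neg_re, Complex.neg_im,
    Complex.I_re, Complex.I_im, Complex.ofReal_re, Complex.ofReal_im, Complex.re_ofNat,
    Complex.im_ofNat] at him
  linarith

lemma cosh_div_sinh_eq {x : ℝ} (hx : x ≠ 0) : cosh x / sinh x = 1 + 2 / (exp (2 * x) - 1) := by
  have hexp : exp (2 * x) - 1 ≠ 0 := by simpa [sub_eq_zero]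
  have hsinh : sinh x = (exp (2 * x) - 1) * exp (-x) / 2 := by
    rw [sinh_eq, sub_mul, ← exp_add]
    ring_nf
  have hcosh : cosh x = (exp (2 * x) + 1) * exp (-x) / 2 := by
    rw [cosh_eq, add_mul, ← exp_add]
    ring_nf
  rw [hsinh, hcosh]
  field_simp
  ring

lemma cosh_div_sinh_le {x : ℝ} (hx : 0 < x) : cosh x / sinh x ≤ 1 + 3 / (2 * x ^ 3) := by
  have hexp : 4 / 3 * x ^ 3 ≤ exp (2 * x) - 1 := by
    have htaylor : 1 + 2 * x + (2 * x) ^ 2 / 2 + (2 * x) ^ 3 / 6 ≤ exp (2 * x) := by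
      simpa [Finset.sum_range_succ, Nat.factorial] using
        sum_le_exp_of_nonneg (x := 2 * x) (by positivity) 4
    linarith [sq_nonneg x]
  calc cosh x / sinh x = 1 + 2 / (exp (2 * x) - 1) := cosh_div_sinh_eq hx.ne'
    _ ≤ 1 + 2 / (4 / 3 * x ^ 3) := by gcongr
    _ = 1 + 3 / (2 * x ^ 3) := by ring

lemma tendsto_cosh_div_sinh_atTop : Tendsto (fun x ↦ cosh x / sinh x) atTop (𝓝 1) := by
  have hexp : Tendsto (fun x ↦ exp (2 * x) - 1) atTop atTop :=
    tendsto_atTop_add_const_right _ _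
      (tendsto_exp_atTop.comp (tendsto_id.const_mul_atTop two_pos))
  have hlim : Tendsto (fun x ↦ 1 + 2 / (exp (2 * x) - 1)) atTop (𝓝 1) := by
    simpa using (hexp.const_div_atTop 2).const_add 1
  refine hlim.congr' ?_
  filter_upwards [eventually_ne_atTop 0] with x hx using (cosh_div_sinh_eq hx).symm

lemma tendsto_div_pi_mul_invSqAddSum_sq :
    Tendsto (fun a ↦ a / π * (2 * invSqAddSum (a ^ 2))) atTop (𝓝 1) := by
  have hlim : Tendsto (fun a ↦ cosh (π * a) / sinh (π * a) - 1 / (π * a)) atTop (𝓝 1) := by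
    have hscale : Tendsto (fun a ↦ π * a) atTop atTop := tendsto_id.const_mul_atTop pi_pos
    simpa using (tendsto_cosh_div_sinh_atTop.comp hscale).sub (hscale.const_div_atTop 1)
  refine hlim.congr' ?_
  filter_upwards [eventually_ne_atTop 0] with a ha
  rw [show a / π * (2 * invSqAddSum (a ^ 2)) = 2 * a * invSqAddSum (a ^ 2) / π by ring,
    two_mul_mul_invSqAddSum_sq ha]
  field_simp

lemma tendsto_sqrt_div_pi_mul_invSqAddSum (β : ℝ) :
    Tendsto (fun l ↦ √l / π * (2 * invSqAddSum (l - β))) atTop (𝓝 1) := by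
  have hshift : Tendsto (fun l ↦ l - β) atTop atTop :=
    tendsto_atTop_add_const_right _ _ tendsto_id
  have hratio : Tendsto (fun l ↦ √(1 + β / (l - β))) atTop (𝓝 1) := by
    simpa using ((hshift.const_div_atTop β).const_add 1).sqrt
  have hlim := hratio.mul (tendsto_div_pi_mul_invSqAddSum_sq.comp (tendsto_sqrt_atTop.comp hshift))
  rw [mul_one] at hlim
  refine hlim.congr' ?_
  filter_upwards [eventually_gt_atTop β] with l hl
  have hpos : 0 < l - β := sub_pos.2 hl
  have hsqrt : √(1 + β / (l - β)) * √(l - β) = √l := by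
    rw [← sqrt_mul' _ hpos.le]
    congr 1
    field_simp
    ring
  simp only [Function.comp_apply, sq_sqrt hpos.le]
  rw [← hsqrt]
  ring

lemma mul_cosh_div_sinh_sub_inv_pi_le {a : ℝ} (ha : 1 ≤ a) :
    a * (cosh (π * a) / sinh (π * a)) - 1 / π ≤ a - 0.268 := by
  have hpi_inv : 0.318 ≤ 1 / π := by
    rw [le_div_iff₀ pi_pos]
    linarith [pi_lt_d6]
  have hpi_cube : 30 ≤ π ^ 3 := by
    calc (30 : ℝ) ≤ 3.141592 ^ 3 := by norm_num
      _ ≤ π ^ 3 := by gcongr; exact pi_gt_d6.le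
  have hcoth : a * (cosh (π * a) / sinh (π * a)) ≤ a + 0.05 := by
    calc a * (cosh (π * a) / sinh (π * a)) ≤ a * (1 + 3 / (2 * (π * a) ^ 3)) := by
          gcongr
          exact cosh_div_sinh_le (by positivity)
      _ = a + 3 / (2 * π ^ 3 * a ^ 2) := by field_simp
      _ ≤ a + 3 / (2 * 30 * 1 ^ 2) := by gcongr
      _ = a + 0.05 := by norm_num
  linarith

lemma sqrt_sq_add_mul_sub_le_sq {a : ℝ} (ha : 1 ≤ a) : √(a ^ 2 + 0.839) * (a - 0.268) ≤ a ^ 2 := by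
  refine le_of_sq_le_sq ?_ (by positivity)
  rw [mul_pow, sq_sqrt (by positivity)]
  have ht := sub_nonneg.2 ha
  nlinarith [pow_nonneg ht 2, pow_nonneg ht 3]

lemma two_mul_sqrt_mul_invSqAddSum_sq_le_pi {a : ℝ} (ha : 1 ≤ a) :
    2 * √(a ^ 2 + 0.839) * invSqAddSum (a ^ 2) ≤ π := by
  have ha0 : 0 < a := by linarith
  calc 2 * √(a ^ 2 + 0.839) * invSqAddSum (a ^ 2)
      = √(a ^ 2 + 0.839) / a * (2 * a * invSqAddSum (a ^ 2)) := by field_simp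
    _ = π * (√(a ^ 2 + 0.839) * (a * (cosh (π * a) / sinh (π * a)) - 1 / π)) / a ^ 2 := by
        rw [two_mul_mul_invSqAddSum_sq ha0.ne']
        field_simp
    _ ≤ π * (√(a ^ 2 + 0.839) * (a - 0.268)) / a ^ 2 := by
        gcongr π * (√(a ^ 2 + 0.839) * ?_) / a ^ 2
        exact mul_cosh_div_sinh_sub_inv_pi_le ha
    _ ≤ π * a ^ 2 / a ^ 2 := by
        gcongr
        exact sqrt_sq_add_mul_sub_le_sq ha
    _ = π := by field_simp

lemma one_div_add_le_quadratic {m c : ℝ} (hm : 1 < m) (hc : -1 ≤ c) :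
    1 / (m + c) ≤ 1 / m - c * (1 / m ^ 2) + c ^ 2 * (1 / (m - 1) - 1 / m - 1 / m ^ 2) := by
  have hmc : 0 < m + c := by linarith
  have hm1 : 0 < m - 1 := by linarith
  have hexact : 1 / (m + c) = 1 / m - c * (1 / m ^ 2) + c ^ 2 / m ^ 2 * (1 / (m + c)) := by
    field_simp
    ring
  have hremainder : c ^ 2 * (1 / (m - 1) - 1 / m - 1 / m ^ 2) = c ^ 2 / m ^ 2 * (1 / (m - 1)) := by
    field_simp
    ring
  rw [hexact, hremainder]
  gcongr
  linarith

lemma hasSum_one_div_add_two_sq_sub_one :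
    HasSum (fun n : ℕ ↦ 1 / (((n : ℝ) + 2) ^ 2 - 1)) (3 / 4) := by
  have hpartial (N : ℕ) : ∑ n ∈ Finset.range N, 1 / (((n : ℝ) + 2) ^ 2 - 1)
      = 3 / 4 - 1 / 2 * (1 / ((N : ℝ) + 1) + 1 / ((N : ℝ) + 2)) := by
    induction N with
    | zero => norm_num
    | succ N ih =>
      have hfactor : ((N : ℝ) + 2) ^ 2 - 1 = (N + 1) * (N + 3) := by ring
      rw [Finset.sum_range_succ, ih, hfactor]
      push_cast
      field_simp
      ring
  rw [hasSum_iff_tendsto_nat_of_nonneg fun n ↦ by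
    have : 1 ≤ ((n : ℝ) + 2) ^ 2 := one_le_pow₀ (by linarith [n.cast_nonneg (α := ℝ)])
    exact one_div_nonneg.2 (by linarith)]
  simp only [hpartial]
  have hinv (k : ℝ) : Tendsto (fun N : ℕ ↦ 1 / ((N : ℝ) + k)) atTop (𝓝 0) :=
    tendsto_const_nhds.div_atTop (tendsto_atTop_add_const_right _ _ tendsto_natCast_atTop_atTop)
  simpa only [add_zero, mul_zero, sub_zero] using
    (((hinv 1).add (hinv 2)).const_mul (1 / 2)).const_sub (3 / 4)

lemma invSqAddSum_le_quadratic {c : ℝ} (hc : -1 < c) :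
    invSqAddSum c ≤ 1 / (1 + c) + ((π ^ 2 / 6 - 1) - c * (π ^ 4 / 90 - 1)
      + c ^ 2 * (3 / 4 - (π ^ 2 / 6 - 1) - (π ^ 4 / 90 - 1))) := by
  have hzeta2 : HasSum (fun n : ℕ ↦ 1 / ((n : ℝ) + 2) ^ 2) (π ^ 2 / 6 - 1) := by
    simpa [Finset.sum_range_succ] using (hasSum_nat_add_iff' 2).2 hasSum_zeta_two
  have hzeta4 : HasSum (fun n : ℕ ↦ 1 / ((n : ℝ) + 2) ^ 4) (π ^ 4 / 90 - 1) := by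
    simpa [Finset.sum_range_succ] using (hasSum_nat_add_iff' 2).2 hasSum_zeta_four
  have hbound := (hzeta2.sub (hzeta4.mul_left c)).add
    (((hasSum_one_div_add_two_sq_sub_one.sub hzeta2).sub hzeta4).mul_left (c ^ 2))
  have hsum := summable_one_div_add_one_sq_add c
  rw [invSqAddSum, hsum.tsum_eq_zero_add, ← hbound.tsum_eq]
  have hfirst : 1 / (((0 : ℕ) + 1 : ℝ) ^ 2 + c) = 1 / (1 + c) := by norm_num
  rw [hfirst]
  gcongr 1 / (1 + c) + ?_
  refine ((summable_nat_add_iff 1).2 hsum).tsum_le_tsum (fun n ↦ ?_) hbound.summable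
  have hn : 1 < ((n : ℝ) + 2) ^ 2 := one_lt_pow₀ (by linarith [n.cast_nonneg (α := ℝ)]) two_ne_zero
  have hshift : ((n + 1 : ℕ) : ℝ) + 1 = n + 2 := by push_cast; ring
  simpa only [hshift, ← pow_mul] using one_div_add_le_quadratic hn hc.le

lemma invSqAddSum_sub_one_le {u : ℝ} (hu : 0 < u) :
    invSqAddSum (u - 1) ≤ 1 / u + (3 / 4 - 0.1278 * u + 0.0228 * u ^ 2) := by
  have hquad := invSqAddSum_le_quadratic (c := u - 1) (by linarith)
  rw [add_sub_cancel] at hquad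
  have hpi2 : 9.8696 < π ^ 2 ∧ π ^ 2 < 9.86961 := by
    constructor <;> nlinarith [pi_gt_d6, pi_lt_d6]
  have hpi4 : 97.4089 < π ^ 4 ∧ π ^ 4 < 97.4093 := by
    constructor <;> nlinarith
  have hlin : 0.1278 ≤ 3 / 2 - 2 * (π ^ 2 / 6 - 1) - (π ^ 4 / 90 - 1) := by linarith
  have hsq : 3 / 4 - (π ^ 2 / 6 - 1) - (π ^ 4 / 90 - 1) ≤ 0.0228 := by linarith
  calc invSqAddSum (u - 1)
      ≤ 1 / u + (3 / 4 - (3 / 2 - 2 * (π ^ 2 / 6 - 1) - (π ^ 4 / 90 - 1)) * u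
        + (3 / 4 - (π ^ 2 / 6 - 1) - (π ^ 4 / 90 - 1)) * u ^ 2) := by linarith
    _ ≤ 1 / u + (3 / 4 - 0.1278 * u + 0.0228 * u ^ 2) := by gcongr

lemma two_mul_mul_one_add_mul_quadratic_le {s : ℝ} (hs0 : 0 ≤ s) (hs1 : s ≤ 1.36) :
    2 * s * (1 + (s ^ 2 + 0.161) *
      (3 / 4 - 0.1278 * (s ^ 2 + 0.161) + 0.0228 * (s ^ 2 + 0.161) ^ 2))
      ≤ 3.1415 * (s ^ 2 + 0.161) := by
  -- The two sides nearly touch at `s ≈ 0.54`. Dividing their difference by `(s - 0.54) ^ 2` leaves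
  -- a quotient with positive Bernstein coefficients on `[0, 1.36]` and a tiny linear remainder,
  -- which `(s - 0.53) ^ 2` absorbs.
  have bernstein (i j : ℕ) : 0 ≤ (s - 0.54) ^ 2 * (s ^ i * (1.36 - s) ^ j) := by
    have := sub_nonneg.2 hs1
    positivity
  linarith [bernstein 0 5, bernstein 1 4, bernstein 2 3, bernstein 3 2, bernstein 4 1,
    bernstein 5 0, sq_nonneg (s - 0.53)]

lemma two_mul_mul_invSqAddSum_le_pi_of_le {s : ℝ} (hs0 : 0 ≤ s) (hs1 : s ≤ 1.36) :
    2 * s * invSqAddSum (s ^ 2 - 0.839) ≤ π := by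
  set u := s ^ 2 + 0.161 with hu
  have hu0 : 0 < u := by positivity
  calc 2 * s * invSqAddSum (s ^ 2 - 0.839)
      = 2 * s * invSqAddSum (u - 1) := by
        rw [show s ^ 2 - 0.839 = u - 1 by rw [hu]; ring]
    _ ≤ 2 * s * (1 / u + (3 / 4 - 0.1278 * u + 0.0228 * u ^ 2)) := by
        gcongr
        exact invSqAddSum_sub_one_le hu0
    _ = 2 * s * (1 + u * (3 / 4 - 0.1278 * u + 0.0228 * u ^ 2)) / u := by field_simp
    _ ≤ 3.1415 * u / u := by
        gcongr ?_ / u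
        exact two_mul_mul_one_add_mul_quadratic_le hs0 hs1
    _ = 3.1415 := by field_simp
    _ ≤ π := by linarith [pi_gt_d6]

lemma two_mul_mul_invSqAddSum_le_pi {s : ℝ} (hs : 0 ≤ s) :
    2 * s * invSqAddSum (s ^ 2 - 0.839) ≤ π := by
  rcases le_total s 1.36 with hsmall | hlarge
  · exact two_mul_mul_invSqAddSum_le_pi_of_le hs hsmall
  · have hsq : 1 ≤ s ^ 2 - 0.839 := by nlinarith
    have h := two_mul_sqrt_mul_invSqAddSum_sq_le_pi (a := √(s ^ 2 - 0.839)) (one_le_sqrt.2 hsq)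
    rwa [sq_sqrt (by linarith), sub_add_cancel, sqrt_sq hs] at h

lemma sqrt_div_pi_mul_invSqAddSum_le_one {β l : ℝ} (hβ : β ≤ 0.839) (hl : 0 < l) :
    √l / π * (2 * invSqAddSum (l - β)) ≤ 1 := by
  have hanti : invSqAddSum (l - β) ≤ invSqAddSum (l - 0.839) :=
    antitoneOn_invSqAddSum (Set.mem_Ioi.2 (by linarith)) (Set.mem_Ioi.2 (by linarith))
      (by linarith)
  calc √l / π * (2 * invSqAddSum (l - β))
      ≤ √l / π * (2 * invSqAddSum (l - 0.839)) := by gcongr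
    _ = 2 * √l * invSqAddSum (√l ^ 2 - 0.839) / π := by rw [sq_sqrt hl.le]; ring
    _ ≤ 1 := (div_le_one pi_pos).2 (two_mul_mul_invSqAddSum_le_pi (sqrt_nonneg l))

theorem stmt_9_general {β : ℝ} (hβ : β ≤ 0.839) : K2 β = 1 := by
  have hle (l : Set.Ioi (0 : ℝ)) : √l / π * (2 * invSqAddSum (l - β)) ≤ 1 :=
    sqrt_div_pi_mul_invSqAddSum_le_one hβ l.2
  have hbdd : BddAbove (Set.range fun l : Set.Ioi (0 : ℝ) ↦ √l / π * (2 * invSqAddSum (l - β))) :=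
    ⟨1, Set.forall_mem_range.2 hle⟩
  simp only [K2, tsum_ne_zero_eq_two_mul_invSqAddSum]
  refine le_antisymm (ciSup_le hle) (le_of_tendsto (tendsto_sqrt_div_pi_mul_invSqAddSum β) ?_)
  filter_upwards [eventually_gt_atTop 0] with l hl using le_ciSup hbdd ⟨l, hl⟩

theorem stmt_9 (β : ℝ) (hβ0 : 0 ≤ β) (hβ1 : β ≤ 0.839) : K2 β = 1 :=
  stmt_9_general hβ1
end

section
/- Let α > 0, β > 0, L = 2π/α, and M, N ≥ 1. Let φ_1, …, φ_N : ℝ → ℂ^M be C¹ functions, L-periodic, and orthonormal in L²((0, L); ℂ^M), i.e. ∫_0^L ⟨φ_n(x), φ_m(x)⟩ dx = δ_{nm}. Define the M×M matrix U(x) := ∑_{n=1}^N φ_n(x) φ_n(x)^*. Then ∫_0^L Tr[U(x)³] dx ≤ K₁(β)² · ∑_{n=1}^N ∑_{j=1}^M ∫_0^L ( |φ_n'(x, j)|² + α² β |φ_n(x, j)|² ) dx, where φ_n(x, j) denotes the j-th component of φ_n(x). -/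
open Real MeasureTheory

/-- The sharp constant `K₁(β) = sup_{λ>0} √λ · coth(π√(β+λ)) / √(β+λ)`. -/
noncomputable def K1 (β : ℝ) : ℝ :=
  ⨆ l : Set.Ioi (0 : ℝ),
    Real.sqrt l * (Real.cosh (π * Real.sqrt (β + l)) / Real.sinh (π * Real.sqrt (β + l))) /
      Real.sqrt (β + l)

/-!
The matrix `U(x) = P Pᴴ`, where `P` has columns `φ_n(x)`, may be replaced by the Gram matrix
`G(x) = Pᴴ P`, since the traces of their powers agree. For a unit vector `ξ ∈ ℂᴺ` the function
`v = ∑ ξ_n φ_n` has `L²` norm one, and `ξᴴ G(x) ξ = ‖v(x)‖²`. The interpolation inequality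
`‖v(x)‖⁴ ≤ K₁(β)² ‖v‖² (‖v'‖² + α² β ‖v‖²)` therefore says `(ξᴴ G(x) ξ)² ≤ K₁(β)² ξᴴ A ξ`, where `A`
is the matrix of the energy form in the `φ_n`. Applied to the eigenvectors of `G(x)`, this gives
`Tr G(x)³ ≤ K₁(β)² Tr (A G(x))`, and integrating over a period turns `G(x)` into the identity.
-/

open scoped Matrix InnerProductSpace

section SharpConstant

variable {β : ℝ}

lemma coth_le_coth {s t : ℝ} (hs : 0 < s) (hst : s ≤ t) :
    cosh t / sinh t ≤ cosh s / sinh s := by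
  have hsinh : 0 < sinh s := sinh_pos_iff.2 hs
  rw [div_le_div_iff₀ (sinh_pos_iff.2 (hs.trans_le hst)) hsinh]
  linarith [sinh_sub t s, sinh_nonneg_iff.2 (sub_nonneg.2 hst)]

lemma bddAbove_range_K1 (hβ : 0 < β) : BddAbove (Set.range fun l : Set.Ioi (0 : ℝ) =>
    √l * (cosh (π * √(β + l)) / sinh (π * √(β + l))) / √(β + l)) := by
  refine ⟨cosh (π * √β) / sinh (π * √β), ?_⟩
  rintro _ ⟨⟨l, hl : 0 < l⟩, rfl⟩
  have hcoth : cosh (π * √(β + l)) / sinh (π * √(β + l)) ≤ cosh (π * √β) / sinh (π * √β) :=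
    coth_le_coth (by positivity) (by gcongr; linarith)
  have hsqrt : √l ≤ √(β + l) := sqrt_le_sqrt (by linarith)
  rw [div_le_iff₀ (by positivity), mul_comm]
  gcongr

lemma le_K1_mul_sqrt_mul_tanh (hβ : 0 < β) {t : ℝ} (ht : 0 < t) :
    t ≤ K1 β * (√(β + t ^ 2) * tanh (π * √(β + t ^ 2))) := by
  have hK1 : t * (cosh (π * √(β + t ^ 2)) / sinh (π * √(β + t ^ 2))) / √(β + t ^ 2) ≤ K1 β := by
    simpa only [K1, sqrt_sq ht.le] using
      le_ciSup (bddAbove_range_K1 hβ) (⟨t ^ 2, pow_pos ht 2⟩ : Set.Ioi (0 : ℝ))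
  calc t = t * (cosh (π * √(β + t ^ 2)) / sinh (π * √(β + t ^ 2))) / √(β + t ^ 2) *
        (√(β + t ^ 2) * tanh (π * √(β + t ^ 2))) := by
        rw [tanh_eq_sinh_div_cosh]; field_simp
    _ ≤ _ := by
        rw [tanh_eq_sinh_div_cosh]; gcongr

lemma K1_nonneg (β : ℝ) : 0 ≤ K1 β :=
  Real.iSup_nonneg fun l => div_nonneg
    (mul_nonneg (sqrt_nonneg _) (div_nonneg (cosh_pos _).le (sinh_nonneg_iff.2 (by positivity))))
    (sqrt_nonneg _)

end SharpConstant

section PeriodicFunctions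

lemma periodic_deriv {E : Type*} [NormedAddCommGroup E] [NormedSpace ℝ E] {v : ℝ → E} {L : ℝ}
    (hper : Function.Periodic v L) : Function.Periodic (deriv v) L := fun x => by
  rw [← deriv_comp_add_const]
  exact congrArg (deriv · x) (funext hper)

lemma hasDerivAt_tanh (x : ℝ) : HasDerivAt tanh (1 - tanh x ^ 2) x := by
  have hcosh : cosh x ≠ 0 := (cosh_pos x).ne'
  have hquot := (hasDerivAt_sinh x).div (hasDerivAt_cosh x) hcosh
  rw [show tanh = sinh / cosh from funext tanh_eq_sinh_div_cosh]
  refine hquot.congr_deriv ?_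
  simp only [Pi.div_apply]
  field_simp

lemma hasDerivAt_mul_tanh_mul_sub (κ c y : ℝ) :
    HasDerivAt (fun y => κ * tanh (κ * (y - c))) (κ ^ 2 - (κ * tanh (κ * (y - c))) ^ 2) y := by
  have hlin : HasDerivAt (fun y => κ * (y - c)) κ y := by
    simpa using ((hasDerivAt_id y).sub_const c).const_mul κ
  exact (((hasDerivAt_tanh _).comp y hlin).const_mul κ).congr_deriv (by ring)

/-- The integral over one period `[0, L]` of `‖v'‖² + c ‖v‖²`. The derivative is Mathlib's `deriv`,
so the definition is only meaningful for differentiable `v`. -/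
noncomputable def sobolevEnergy {E : Type*} [NormedAddCommGroup E] [NormedSpace ℝ E] (L c : ℝ)
    (v : ℝ → E) : ℝ :=
  ∫ x in (0 : ℝ)..L, (‖deriv v x‖ ^ 2 + c * ‖v x‖ ^ 2)

section NormedSpace

variable {E : Type*} [NormedAddCommGroup E] [NormedSpace ℝ E] {v : ℝ → E} {L c : ℝ}

lemma sobolevEnergy_eq_add (hv : ContDiff ℝ 1 v) (L c : ℝ) :
    sobolevEnergy L c v =
      (∫ x in (0 : ℝ)..L, ‖deriv v x‖ ^ 2) + c * ∫ x in (0 : ℝ)..L, ‖v x‖ ^ 2 := by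
  rw [sobolevEnergy, intervalIntegral.integral_add, intervalIntegral.integral_const_mul] <;>
    exact Continuous.intervalIntegrable (by fun_prop) _ _

lemma sobolevEnergy_nonneg (hL : 0 ≤ L) (hc : 0 ≤ c) (v : ℝ → E) : 0 ≤ sobolevEnergy L c v :=
  intervalIntegral.integral_nonneg hL fun _ _ => by positivity

lemma sobolevEnergy_eq_integral_add (hper : Function.Periodic v L) (x : ℝ) :
    sobolevEnergy L c v = ∫ y in x..x + L, (‖deriv v y‖ ^ 2 + c * ‖v y‖ ^ 2) := by
  have hdensity : Function.Periodic (fun y => ‖deriv v y‖ ^ 2 + c * ‖v y‖ ^ 2) L := fun y => by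
    simp only [periodic_deriv hper y, hper y]
  simpa only [zero_add] using! hdensity.intervalIntegral_add_eq 0 x

end NormedSpace

variable {E : Type*} [NormedAddCommGroup E] [InnerProductSpace ℝ E] {v : ℝ → E}

lemma two_mul_inner_sub_sq_mul_norm_sq_le (w : ℝ) (a b : E) :
    2 * w * ⟪a, b⟫_ℝ - w ^ 2 * ‖a‖ ^ 2 ≤ ‖b‖ ^ 2 := by
  have hsq := norm_sub_sq_real (w • a) b
  rw [real_inner_smul_left, norm_smul, mul_pow, norm_eq_abs, sq_abs] at hsq
  linarith [sq_nonneg ‖w • a - b‖]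

/-- The weight `w = κ tanh (κ (· - c))`, centred at the midpoint `c` of the period, solves the
Riccati equation `w' = κ² - w²`, so `(w ‖v‖²)'` is dominated by `‖v'‖² + κ² ‖v‖²`. -/
lemma two_mul_tanh_mul_norm_sq_le_sobolevEnergy (hv : ContDiff ℝ 1 v) {L : ℝ} (hL : 0 ≤ L)
    (hper : Function.Periodic v L) (κ x : ℝ) :
    2 * (κ * tanh (κ * (L / 2))) * ‖v x‖ ^ 2 ≤ sobolevEnergy L (κ ^ 2) v := by
  set w : ℝ → ℝ := fun y => κ * tanh (κ * (y - (x + L / 2))) with hw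
  have hw_deriv : ∀ y, HasDerivAt w (κ ^ 2 - w y ^ 2) y := hasDerivAt_mul_tanh_mul_sub κ _
  have hw_cont : Continuous w := continuous_iff_continuousAt.2 fun y => (hw_deriv y).continuousAt
  have hw_left : w x = -(κ * tanh (κ * (L / 2))) := by
    rw [hw, ← mul_neg, ← tanh_neg]; ring_nf
  have hw_right : w (x + L) = κ * tanh (κ * (L / 2)) := by
    rw [hw]; ring_nf
  have hv_deriv : ∀ y, HasDerivAt v (deriv v y) y := fun y =>
    (hv.differentiable one_ne_zero y).hasDerivAt
  calc 2 * (κ * tanh (κ * (L / 2))) * ‖v x‖ ^ 2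
      = w (x + L) * ‖v (x + L)‖ ^ 2 - w x * ‖v x‖ ^ 2 := by
        rw [hper x, hw_left, hw_right]; ring
    _ = ∫ y in x..x + L, ((κ ^ 2 - w y ^ 2) * ‖v y‖ ^ 2 + w y * (2 * ⟪v y, deriv v y⟫_ℝ)) :=
        (intervalIntegral.integral_eq_sub_of_hasDerivAt
          (fun y _ => (hw_deriv y).mul (hv_deriv y).norm_sq)
          (Continuous.intervalIntegrable (by fun_prop) _ _)).symm
    _ ≤ ∫ y in x..x + L, (‖deriv v y‖ ^ 2 + κ ^ 2 * ‖v y‖ ^ 2) := by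
        refine intervalIntegral.integral_mono_on (by linarith)
          (Continuous.intervalIntegrable (by fun_prop) _ _)
          (Continuous.intervalIntegrable (by fun_prop) _ _) fun y _ => ?_
        linarith [two_mul_inner_sub_sq_mul_norm_sq_le (w y) (v y) (deriv v y)]
    _ = sobolevEnergy L (κ ^ 2) v := (sobolevEnergy_eq_integral_add hper x).symm

variable {α β : ℝ}

lemma two_mul_mul_norm_sq_le_K1_mul (hα : 0 < α) (hβ : 0 < β) (hv : ContDiff ℝ 1 v)
    (hper : Function.Periodic v (2 * π / α)) {t : ℝ} (ht : 0 < t) (x : ℝ) :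
    2 * (α * t) * ‖v x‖ ^ 2 ≤ K1 β * (sobolevEnergy (2 * π / α) (α ^ 2 * β) v +
      (α * t) ^ 2 * ∫ y in (0 : ℝ)..2 * π / α, ‖v y‖ ^ 2) := by
  set κ := α * √(β + t ^ 2) with hκ
  have hκ_sq : κ ^ 2 = α ^ 2 * β + (α * t) ^ 2 := by
    rw [hκ, mul_pow, sq_sqrt (by positivity)]; ring
  have hκ_half : κ * (2 * π / α / 2) = π * √(β + t ^ 2) := by
    rw [hκ]; field_simp
  have hweight : α * t ≤ K1 β * (κ * tanh (κ * (2 * π / α / 2))) := by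
    rw [hκ_half]
    calc α * t ≤ α * (K1 β * (√(β + t ^ 2) * tanh (π * √(β + t ^ 2)))) := by
          gcongr; exact le_K1_mul_sqrt_mul_tanh hβ ht
      _ = _ := by ring
  calc 2 * (α * t) * ‖v x‖ ^ 2
      ≤ 2 * (K1 β * (κ * tanh (κ * (2 * π / α / 2)))) * ‖v x‖ ^ 2 := by gcongr
    _ = K1 β * (2 * (κ * tanh (κ * (2 * π / α / 2))) * ‖v x‖ ^ 2) := by ring
    _ ≤ K1 β * sobolevEnergy (2 * π / α) (κ ^ 2) v :=
        mul_le_mul_of_nonneg_left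
          (two_mul_tanh_mul_norm_sq_le_sobolevEnergy hv (by positivity) hper κ x) (K1_nonneg β)
    _ = _ := by
        rw [sobolevEnergy_eq_add hv, sobolevEnergy_eq_add hv, hκ_sq]; ring

/-- Optimizing `t` in `two_mul_mul_norm_sq_le_K1_mul` through a discriminant needs no separate
treatment of a vanishing `L²` norm. -/
theorem norm_pow_four_le_K1_sq_mul (hα : 0 < α) (hβ : 0 < β) (hv : ContDiff ℝ 1 v)
    (hper : Function.Periodic v (2 * π / α)) (x : ℝ) :
    ‖v x‖ ^ 4 ≤ K1 β ^ 2 * (∫ y in (0 : ℝ)..2 * π / α, ‖v y‖ ^ 2) *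
      sobolevEnergy (2 * π / α) (α ^ 2 * β) v := by
  set mass := ∫ y in (0 : ℝ)..2 * π / α, ‖v y‖ ^ 2
  set energy := sobolevEnergy (2 * π / α) (α ^ 2 * β) v
  have hmass_nonneg : 0 ≤ mass :=
    intervalIntegral.integral_nonneg (by positivity) fun y _ => sq_nonneg ‖v y‖
  have henergy_nonneg : 0 ≤ energy := sobolevEnergy_nonneg (by positivity) (by positivity) v
  have hK1 : 0 ≤ K1 β := K1_nonneg β
  have hquad : ∀ t : ℝ, 0 ≤ K1 β * (α ^ 2 * mass) * (t * t) + -(2 * α * ‖v x‖ ^ 2) * t +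
      K1 β * energy := fun t => by
    rcases le_or_gt t 0 with ht | ht
    · have hlinear : 0 ≤ 2 * α * ‖v x‖ ^ 2 * -t := mul_nonneg (by positivity) (neg_nonneg.2 ht)
      have hrest : 0 ≤ K1 β * (α ^ 2 * mass) * (t * t) + K1 β * energy :=
        add_nonneg (mul_nonneg (by positivity) (mul_self_nonneg t)) (by positivity)
      linarith
    · linarith [two_mul_mul_norm_sq_le_K1_mul hα hβ hv hper ht x]
  have hdiscrim := discrim_le_zero hquad
  rw [discrim] at hdiscrim
  refine le_of_mul_le_mul_left ?_ (show 0 < 4 * α ^ 2 by positivity)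
  linarith

end PeriodicFunctions

section TraceInequality

variable {m n 𝕜 : Type*} [Fintype m] [Fintype n] [DecidableEq m] [DecidableEq n]

lemma trace_mul_eq_sum_eigenvalues_mul [RCLike 𝕜] {G : Matrix n n 𝕜} (hG : G.IsHermitian)
    (A : Matrix n n 𝕜) :
    (A * G).trace = ∑ k, (hG.eigenvalues k : 𝕜) *
      (star ⇑(hG.eigenvectorBasis k) ⬝ᵥ A *ᵥ ⇑(hG.eigenvectorBasis k)) := by
  calc (A * G).trace = LinearMap.trace 𝕜 _ (Matrix.toEuclideanLin (A * G)) := by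
        rw [Matrix.toEuclideanLin, Matrix.toLpLin_eq_toLin, Matrix.trace_toLin_eq]
    _ = ∑ k, ⟪hG.eigenvectorBasis k, Matrix.toEuclideanLin (A * G) (hG.eigenvectorBasis k)⟫_𝕜 :=
        LinearMap.trace_eq_sum_inner _ hG.eigenvectorBasis
    _ = _ := Finset.sum_congr rfl fun k _ => by
        rw [EuclideanSpace.inner_eq_star_dotProduct, Matrix.ofLp_toLpLin, Matrix.toLin'_apply,
          ← Matrix.mulVec_mulVec, hG.mulVec_eigenvectorBasis, Matrix.mulVec_smul,
          smul_dotProduct, dotProduct_comm, RCLike.real_smul_eq_coe_mul]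

lemma trace_pow_eq_sum_eigenvalues_pow [RCLike 𝕜] {G : Matrix n n 𝕜} (hG : G.IsHermitian) (p : ℕ) :
    (G ^ p).trace = ∑ k, (hG.eigenvalues k : 𝕜) ^ p := by
  conv_lhs => rw [hG.spectral_theorem]
  rw [← map_pow, Unitary.conjStarAlgAut_apply, Matrix.trace_mul_cycle, Unitary.coe_star_mul_self,
    one_mul, Matrix.diagonal_pow, Matrix.trace_diagonal]
  rfl

open scoped ComplexOrder in
lemma re_trace_pow_succ_le_re_trace_mul [RCLike 𝕜] {A G : Matrix n n 𝕜} (hG : G.PosSemidef)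
    {p : ℕ} (hle : ∀ ξ : n → 𝕜, star ξ ⬝ᵥ ξ = 1 →
      RCLike.re (star ξ ⬝ᵥ G *ᵥ ξ) ^ p ≤ RCLike.re (star ξ ⬝ᵥ A *ᵥ ξ)) :
    RCLike.re (G ^ (p + 1)).trace ≤ RCLike.re (A * G).trace := by
  have hpow : RCLike.re (G ^ (p + 1)).trace = ∑ k, hG.1.eigenvalues k ^ (p + 1) := by
    simp only [trace_pow_eq_sum_eigenvalues_pow hG.1, map_sum, ← RCLike.ofReal_pow,
      RCLike.ofReal_re]
  have hmul : RCLike.re (A * G).trace = ∑ k, hG.1.eigenvalues k *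
      RCLike.re (star ⇑(hG.1.eigenvectorBasis k) ⬝ᵥ A *ᵥ ⇑(hG.1.eigenvectorBasis k)) := by
    simp only [trace_mul_eq_sum_eigenvalues_mul hG.1, map_sum, RCLike.re_ofReal_mul]
  have hunit : ∀ k, star ⇑(hG.1.eigenvectorBasis k) ⬝ᵥ ⇑(hG.1.eigenvectorBasis k) = (1 : 𝕜) :=
    fun k => by
      rw [dotProduct_comm, ← EuclideanSpace.inner_eq_star_dotProduct]
      simp
  rw [hpow, hmul]
  refine Finset.sum_le_sum fun k _ => ?_
  have hunit_le := hle _ (hunit k)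
  rw [← hG.1.eigenvalues_eq] at hunit_le
  rw [pow_succ']
  exact mul_le_mul_of_nonneg_left hunit_le (hG.eigenvalues_nonneg k)

lemma mul_pow_succ_eq_mul_pow_mul {R : Type*} [Semiring R] (P : Matrix m n R) (Q : Matrix n m R)
    (p : ℕ) : (P * Q) ^ (p + 1) = P * (Q * P) ^ p * Q := by
  induction p with
  | zero => simp
  | succ p ih => rw [pow_succ, ih, pow_succ]; simp only [Matrix.mul_assoc]

lemma trace_mul_pow_succ_comm {R : Type*} [CommSemiring R] (P : Matrix m n R) (Q : Matrix n m R)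
    (p : ℕ) : ((P * Q) ^ (p + 1)).trace = ((Q * P) ^ (p + 1)).trace := by
  rw [mul_pow_succ_eq_mul_pow_mul, Matrix.trace_mul_comm, ← Matrix.mul_assoc, pow_succ']

lemma trace_sum_mul_conj_pow_succ (v : n → m → ℂ) (p : ℕ) :
    ((Matrix.of fun j k => ∑ i, v i j * (starRingEnd ℂ) (v i k)) ^ (p + 1)).trace =
      (Matrix.gram ℂ (fun i => WithLp.toLp 2 (v i)) ^ (p + 1)).trace := by
  set P : Matrix m n ℂ := Matrix.of fun j i => v i j with hP
  have hout : (Matrix.of fun j k => ∑ i, v i j * (starRingEnd ℂ) (v i k)) = P * Pᴴ := by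
    ext; simp [hP, Matrix.mul_apply]
  have hgram : Matrix.gram ℂ (fun i => WithLp.toLp 2 (v i)) = Pᴴ * P := by
    ext; simp [hP, Matrix.mul_apply, PiLp.inner_apply, mul_comm]
  rw [hout, hgram, trace_mul_pow_succ_comm]

end TraceInequality

section L2Gram

variable {ι E : Type*} [NormedAddCommGroup E] [InnerProductSpace ℂ E]

/-- The Gram matrix of the functions `f n` in `L²((0, L); E)`: its entries are
`∫ x in 0..L, ⟪f n x, f m x⟫`, the inner product being conjugate-linear in the first argument. -/
noncomputable def l2Gram (L : ℝ) (f : ι → ℝ → E) : Matrix ι ι ℂ :=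
  Matrix.of fun n m => ∫ x in (0 : ℝ)..L, ⟪f n x, f m x⟫_ℂ

lemma continuous_gram {X : Type*} [TopologicalSpace X] {f : ι → X → E}
    (hf : ∀ n, Continuous (f n)) : Continuous fun x => Matrix.gram ℂ fun n => f n x :=
  continuous_matrix fun n m => (hf n).inner (hf m)

variable [Fintype ι] {f : ι → ℝ → E}

lemma re_trace_mul_l2Gram (hf : ∀ n, Continuous (f n)) (L : ℝ) (A : Matrix ι ι ℂ) :
    (A * l2Gram L f).trace.re =
      ∫ x in (0 : ℝ)..L, (A * Matrix.gram ℂ fun n => f n x).trace.re := by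
  have hgram : Continuous fun x => Matrix.gram ℂ fun n => f n x := continuous_gram hf
  have htrace : (A * l2Gram L f).trace =
      ∫ x in (0 : ℝ)..L, (A * Matrix.gram ℂ fun n => f n x).trace := by
    simp only [Matrix.trace, Matrix.diag_apply, Matrix.mul_apply, l2Gram, Matrix.of_apply,
      Matrix.gram_apply, ← intervalIntegral.integral_const_mul]
    simp (disch := exact fun _ _ => Continuous.intervalIntegrable (by fun_prop) _ _) only
      [intervalIntegral.integral_finsetSum]
  rw [htrace]
  exact (intervalIntegral.intervalIntegral_re
    ((continuous_const.matrix_mul hgram).matrix_trace.intervalIntegrable _ _)).symm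

lemma re_star_dotProduct_l2Gram_mulVec (hf : ∀ n, Continuous (f n)) (L : ℝ) (ξ : ι → ℂ) :
    (star ξ ⬝ᵥ l2Gram L f *ᵥ ξ).re = ∫ x in (0 : ℝ)..L, ‖∑ n, ξ n • f n x‖ ^ 2 := by
  have htrace : ∀ B : Matrix ι ι ℂ, star ξ ⬝ᵥ B *ᵥ ξ = (Matrix.vecMulVec ξ (star ξ) * B).trace :=
    fun B => by
      rw [Matrix.vecMulVec_mul, Matrix.trace_vecMulVec, Matrix.dotProduct_mulVec, dotProduct_comm]
  rw [htrace, re_trace_mul_l2Gram hf]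
  refine intervalIntegral.integral_congr fun x _ => ?_
  rw [← htrace, Matrix.star_dotProduct_gram_mulVec]
  exact inner_self_eq_norm_sq (𝕜 := ℂ) _

lemma re_trace_l2Gram (L : ℝ) (f : ι → ℝ → E) :
    (l2Gram L f).trace.re = ∑ n, ∫ x in (0 : ℝ)..L, ‖f n x‖ ^ 2 := by
  simp only [Matrix.trace, Matrix.diag_apply, l2Gram, Matrix.of_apply, Complex.re_sum]
  refine Finset.sum_congr rfl fun n _ => ?_
  simp only [inner_self_eq_norm_sq_to_K, Complex.coe_algebraMap, ← Complex.ofReal_pow,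
    intervalIntegral.integral_ofReal, Complex.ofReal_re]

/-- The matrix of the Hermitian form `∫ x in 0..L, (⟪v', w'⟫ + c ⟪v, w⟫)`, whose diagonal is
`sobolevEnergy L c`, in the functions `φ n`. -/
noncomputable def energyGram (L c : ℝ) (φ : ι → ℝ → E) : Matrix ι ι ℂ :=
  l2Gram L (fun n => deriv (φ n)) + (c : ℂ) • l2Gram L φ

variable {φ : ι → ℝ → E}

lemma re_star_dotProduct_energyGram_mulVec (hφ : ∀ n, ContDiff ℝ 1 (φ n)) (L c : ℝ) (ξ : ι → ℂ) :
    (star ξ ⬝ᵥ energyGram L c φ *ᵥ ξ).re = sobolevEnergy L c fun x => ∑ n, ξ n • φ n x := by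
  have hsum : ContDiff ℝ 1 fun x => ∑ n, ξ n • φ n x :=
    ContDiff.sum fun n _ => (hφ n).const_smul (ξ n)
  have hderiv : ∀ x, deriv (fun x => ∑ n, ξ n • φ n x) x = ∑ n, ξ n • deriv (φ n) x := fun x =>
    (HasDerivAt.fun_sum fun n _ =>
      ((hφ n).differentiable one_ne_zero x).hasDerivAt.const_smul (ξ n)).deriv
  rw [sobolevEnergy_eq_add hsum, energyGram, Matrix.add_mulVec, Matrix.smul_mulVec, dotProduct_add,
    dotProduct_smul, smul_eq_mul, Complex.add_re, Complex.re_ofReal_mul,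
    re_star_dotProduct_l2Gram_mulVec fun n => (hφ n).continuous_deriv le_rfl,
    re_star_dotProduct_l2Gram_mulVec fun n => (hφ n).continuous]
  simp only [hderiv]

lemma re_trace_energyGram (hφ : ∀ n, ContDiff ℝ 1 (φ n)) (L c : ℝ) :
    (energyGram L c φ).trace.re = ∑ n, sobolevEnergy L c (φ n) := by
  rw [energyGram, Matrix.trace_add, Matrix.trace_smul, smul_eq_mul, Complex.add_re,
    Complex.re_ofReal_mul, re_trace_l2Gram, re_trace_l2Gram, Finset.mul_sum,
    ← Finset.sum_add_distrib]
  exact Finset.sum_congr rfl fun n _ => (sobolevEnergy_eq_add (hφ n) L c).symm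

variable [DecidableEq ι] {α β : ℝ}

lemma re_trace_gram_pow_three_le (hα : 0 < α) (hβ : 0 < β) (hφ : ∀ n, ContDiff ℝ 1 (φ n))
    (hper : ∀ n, Function.Periodic (φ n) (2 * π / α)) (hortho : l2Gram (2 * π / α) φ = 1) (x : ℝ) :
    (Matrix.gram ℂ (fun n => φ n x) ^ 3).trace.re ≤
      K1 β ^ 2 *
        (energyGram (2 * π / α) (α ^ 2 * β) φ * Matrix.gram ℂ fun n => φ n x).trace.re := by
  rw [← Complex.re_ofReal_mul, ← smul_eq_mul, ← Matrix.trace_smul, ← Matrix.smul_mul]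
  refine re_trace_pow_succ_le_re_trace_mul (Matrix.posSemidef_gram ℂ _) fun ξ hξ => ?_
  let _ : InnerProductSpace ℝ E := InnerProductSpace.complexToReal
  set v : ℝ → E := fun y => ∑ n, ξ n • φ n y with hv
  have hv_smooth : ContDiff ℝ 1 v := ContDiff.sum fun n _ => (hφ n).const_smul (ξ n)
  have hv_per : Function.Periodic v (2 * π / α) := fun y => by
    simp only [hv, hper _ y]
  have hmass : ∫ y in (0 : ℝ)..2 * π / α, ‖v y‖ ^ 2 = 1 := by
    rw [← re_star_dotProduct_l2Gram_mulVec fun n => (hφ n).continuous, hortho, Matrix.one_mulVec,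
      hξ, Complex.one_re]
  calc RCLike.re (star ξ ⬝ᵥ Matrix.gram ℂ (fun n => φ n x) *ᵥ ξ) ^ 2
      = ‖v x‖ ^ 4 := by
        rw [Matrix.star_dotProduct_gram_mulVec, inner_self_eq_norm_sq (𝕜 := ℂ), ← pow_mul]
    _ ≤ K1 β ^ 2 * sobolevEnergy (2 * π / α) (α ^ 2 * β) v := by
        simpa only [hmass, mul_one] using norm_pow_four_le_K1_sq_mul hα hβ hv_smooth hv_per x
    _ = _ := by
        rw [Matrix.smul_mulVec, dotProduct_smul, smul_eq_mul, RCLike.re_eq_complex_re,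
          Complex.re_ofReal_mul, re_star_dotProduct_energyGram_mulVec hφ]

theorem stmt_11_general (hα : 0 < α) (hβ : 0 < β) (hφ : ∀ n, ContDiff ℝ 1 (φ n))
    (hper : ∀ n, Function.Periodic (φ n) (2 * π / α)) (hortho : l2Gram (2 * π / α) φ = 1) :
    ∫ x in (0 : ℝ)..2 * π / α, (Matrix.gram ℂ (fun n => φ n x) ^ 3).trace.re ≤
      K1 β ^ 2 * ∑ n, sobolevEnergy (2 * π / α) (α ^ 2 * β) (φ n) := by
  set A := energyGram (2 * π / α) (α ^ 2 * β) φ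
  have hcont : ∀ n, Continuous (φ n) := fun n => (hφ n).continuous
  have hgram : Continuous fun x => Matrix.gram ℂ fun n => φ n x := continuous_gram hcont
  calc ∫ x in (0 : ℝ)..2 * π / α, (Matrix.gram ℂ (fun n => φ n x) ^ 3).trace.re
      ≤ ∫ x in (0 : ℝ)..2 * π / α, K1 β ^ 2 * (A * Matrix.gram ℂ fun n => φ n x).trace.re :=
        intervalIntegral.integral_mono (by positivity)
          (Continuous.intervalIntegrable (by fun_prop) _ _)
          (Continuous.intervalIntegrable (by fun_prop) _ _)
          (re_trace_gram_pow_three_le hα hβ hφ hper hortho)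
    _ = K1 β ^ 2 * (A * l2Gram (2 * π / α) φ).trace.re := by
        rw [intervalIntegral.integral_const_mul, re_trace_mul_l2Gram hcont]
    _ = K1 β ^ 2 * ∑ n, sobolevEnergy (2 * π / α) (α ^ 2 * β) (φ n) := by
        rw [hortho, mul_one, re_trace_energyGram hφ]

end L2Gram

section Coordinates

variable {ι κ : Type*} [Fintype κ]

lemma l2Gram_toLp (L : ℝ) (φ : ι → ℝ → κ → ℂ) :
    l2Gram L (fun n x => WithLp.toLp 2 (φ n x)) =
      Matrix.of fun n m => ∫ x in (0 : ℝ)..L, ∑ j, φ m x j * (starRingEnd ℂ) (φ n x j) := by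
  simp only [l2Gram, PiLp.inner_apply, RCLike.inner_apply]

lemma sobolevEnergy_toLp {v : ℝ → κ → ℂ} (hv : ContDiff ℝ 1 v) (L c : ℝ) :
    sobolevEnergy L c (fun x => WithLp.toLp 2 (v x)) =
      ∑ j, ∫ x in (0 : ℝ)..L, (‖deriv (fun t => v t j) x‖ ^ 2 + c * ‖v x j‖ ^ 2) := by
  have hcoord : ∀ j, ContDiff ℝ 1 fun x => v x j := contDiff_pi.1 hv
  have hderiv : ∀ x, deriv (fun x => WithLp.toLp 2 (v x)) x =
      WithLp.toLp 2 fun j => deriv (fun t => v t j) x := fun x => by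
    have hv_deriv : HasDerivAt v (fun j => deriv (fun t => v t j) x) x :=
      hasDerivAt_pi.2 fun j => ((hcoord j).differentiable one_ne_zero x).hasDerivAt
    exact ((PiLp.hasFDerivAt_toLp 2 (v x)).comp_hasDerivAt x hv_deriv).deriv
  rw [← intervalIntegral.integral_finsetSum
    fun j _ => Continuous.intervalIntegrable (by fun_prop) _ _]
  simp only [sobolevEnergy, hderiv, EuclideanSpace.norm_sq_eq, Finset.sum_add_distrib,
    Finset.mul_sum]

end Coordinates

theorem stmt_11 (α β : ℝ) (hα : 0 < α) (hβ : 0 < β) (L : ℝ) (hL : L = 2 * π / α)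
    (M N : ℕ) (hM : 1 ≤ M) (hN : 1 ≤ N)
    (φ : Fin N → ℝ → Fin M → ℂ) (hφ : ∀ n, ContDiff ℝ 1 (φ n))
    (hper : ∀ n, Function.Periodic (φ n) L)
    (hortho : ∀ n m, (∫ x in (0:ℝ)..L, ∑ j, φ n x j * (starRingEnd ℂ) (φ m x j)) =
      if n = m then 1 else 0)
    (U : ℝ → Matrix (Fin M) (Fin M) ℂ)
    (hU : ∀ x, U x = Matrix.of fun j k => ∑ n, φ n x j * (starRingEnd ℂ) (φ n x k)) :
    (∫ x in (0:ℝ)..L, ((U x ^ 3).trace).re) ≤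
      K1 β ^ 2 * ∑ n, ∑ j, ∫ x in (0:ℝ)..L,
        (‖deriv (fun t => φ n t j) x‖ ^ 2 + α ^ 2 * β * ‖φ n x j‖ ^ 2) := by
  subst hL
  have hortho' : l2Gram (2 * π / α) (fun n x => WithLp.toLp 2 (φ n x)) = 1 := by
    ext n m
    simp only [l2Gram_toLp, Matrix.of_apply, hortho, Matrix.one_apply, eq_comm]
  simpa only [hU, trace_sum_mul_conj_pow_succ, sobolevEnergy_toLp (hφ _)] using
    stmt_11_general (φ := fun n x => WithLp.toLp 2 (φ n x)) hα hβ
      (fun n => PiLp.contDiff_toLp.fun_comp (hφ n)) (fun n => (hper n).comp (WithLp.toLp 2)) hortho'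
end

section
/- Let 0 ≤ β < 1 and M, N ≥ 1. Let φ_1, …, φ_N : ℝ → ℂ^M be C¹ functions, 2π-periodic, satisfying ∫_0^{2π} φ_n(x, j) dx = 0 for all n and all components j, and orthonormal in L²((0, 2π); ℂ^M), i.e. ∫_0^{2π} ⟨φ_n(x), φ_m(x)⟩ dx = δ_{nm}. Define the M×M matrix U(x) := ∑_{n=1}^N φ_n(x) φ_n(x)^*. Then ∫_0^{2π} Tr[U(x)³] dx ≤ K₂(β)² · ∑_{n=1}^N ∑_{j=1}^M ∫_0^{2π} ( |φ_n'(x, j)|² − β |φ_n(x, j)|² ) dx, where φ_n(x, j) denotes the j-th component of φ_n(x). -/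
open Real MeasureTheory

/-!
Write `R = ΦᴴΦ` where the columns of `Φ x` are the `φ_n(x)`, so that `Tr U³ = Tr R³`, and let `A` be
the matrix of the form `∫ (⟨f', g'⟩ - β ⟨f, g⟩)` on the span of the `φ_n`.

For a mean-zero periodic scalar `f` and `s > 0`, Cauchy–Schwarz on the Fourier series gives
`2π |f y|² ≤ (∑_{k ≠ 0} 1 / (k² - β + s²)) · (E + s² m)`, where `E = ∫ (|f'|² - β |f|²)` and
`m = ∫ |f|²`. The sum is at most `π K₂(β) / s`, and optimising over `s` yields
`|f y|⁴ ≤ K₂(β)² E m`. Applied to the components of `Φ ξ` for a unit vector `ξ`, this becomes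
`⟨ξ, R(y) ξ⟩² ≤ K₂(β)² ⟨ξ, A ξ⟩`. Summing over an eigenbasis of `R(y)` with the eigenvalues as
weights gives `Tr R(y)³ ≤ K₂(β)² Tr (R(y) A)`, and integrating in `y` turns `R(y)` into
the identity by orthonormality.
-/

/-! ### The constant `K₂` and resolvent sums -/

theorem tsum_int_ne_zero_of_even {f : ℤ → ℝ} (heven : f.Even)
    (hf : Summable fun k : {k : ℤ // k ≠ 0} ↦ f k) :
    ∑' k : {k : ℤ // k ≠ 0}, f k = 2 * ∑' n : ℕ, f (n + 1) := by
  have hsummable : Summable f := (Set.finite_singleton (0 : ℤ)).summable_compl_iff.1 hf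
  have hsplit : f 0 + ∑' k : {k : ℤ // k ≠ 0}, f k = ∑' k, f k := by
    rw [← hsummable.tsum_subtype_add_tsum_subtype_compl {0}, tsum_singleton]
    rfl
  have hpnat := tsum_int_eq_zero_add_two_mul_tsum_pnat heven hsummable
  rw [tsum_pnat_eq_tsum_succ (f := fun n : ℕ ↦ f n), nsmul_eq_mul] at hpnat
  push_cast at hpnat
  linarith

theorem sum_range_one_div_add_one_sq_add_sq_le {s : ℝ} (hs : 0 < s) (n : ℕ) :
    ∑ i ∈ Finset.range n, 1 / (((i : ℝ) + 1) ^ 2 + s ^ 2) ≤ π / (2 * s) := by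
  have hanti : AntitoneOn (fun x : ℝ ↦ 1 / (x ^ 2 + s ^ 2)) (Set.Icc 0 (0 + n)) := by
    intro x hx y _ hxy
    have : 0 ≤ x := hx.1
    dsimp only
    gcongr
  have hintegral : ∫ x in (0 : ℝ)..n, 1 / (x ^ 2 + s ^ 2) = arctan (n / s) / s := by
    have hscale (x : ℝ) : 1 / (x ^ 2 + s ^ 2) = (s ^ 2)⁻¹ * (1 + (x / s) ^ 2)⁻¹ := by
      field_simp
      ring
    simp_rw [hscale, intervalIntegral.integral_const_mul]
    rw [intervalIntegral.integral_comp_div (fun x ↦ (1 + x ^ 2)⁻¹) hs.ne', integral_inv_one_add_sq,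
      zero_div, arctan_zero, sub_zero, smul_eq_mul]
    field_simp
  calc ∑ i ∈ Finset.range n, 1 / (((i : ℝ) + 1) ^ 2 + s ^ 2)
      ≤ ∫ x in (0 : ℝ)..n, 1 / (x ^ 2 + s ^ 2) := by
        simpa only [zero_add, Nat.cast_add_one] using hanti.sum_le_integral
    _ = arctan (n / s) / s := hintegral
    _ ≤ π / 2 / s := by gcongr; exact (arctan_lt_pi_div_two _).le
    _ = π / (2 * s) := div_div ..

theorem one_le_intCast_sq {k : ℤ} (hk : k ≠ 0) : (1 : ℝ) ≤ (k : ℝ) ^ 2 := by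
  exact_mod_cast Int.add_one_le_of_lt (sq_pos_of_ne_zero hk)

theorem intCast_sq_sub_pos {γ : ℝ} (hγ : γ < 1) {k : ℤ} (hk : k ≠ 0) : 0 < (k : ℝ) ^ 2 - γ :=
  sub_pos.2 (hγ.trans_le (one_le_intCast_sq hk))

theorem one_div_sq_sub_le {β l : ℝ} (hβ : β < 1) (hl : 0 ≤ l) {k : ℤ} (hk : k ≠ 0) :
    1 / ((k : ℝ) ^ 2 - (β - l)) ≤ (min 1 (1 - β))⁻¹ * (1 / ((k : ℝ) ^ 2 + l)) := by
  have hk1 := one_le_intCast_sq hk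
  have : 0 < min 1 (1 - β) := lt_min one_pos (sub_pos.2 hβ)
  rw [← one_div, one_div_mul_one_div]
  refine one_div_le_one_div_of_le (by positivity) ?_
  rcases min_cases 1 (1 - β) with ⟨h, h'⟩ | ⟨h, h'⟩ <;> rw [h] <;> nlinarith

/-- The trace `∑_{k ≠ 0} 1 / (k² - γ)` of the resolvent at `γ` of `-d²/dx²` on mean-zero
`2π`-periodic functions; it is `2π` times the diagonal value of the Green function. -/
noncomputable def resolventSum (γ : ℝ) : ℝ :=
  ∑' k : {k : ℤ // k ≠ 0}, 1 / ((k : ℝ) ^ 2 - γ)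

theorem summable_one_div_sq_sub {γ : ℝ} (hγ : γ < 1) :
    Summable fun k : {k : ℤ // k ≠ 0} ↦ 1 / ((k : ℝ) ^ 2 - γ) := by
  refine .of_nonneg_of_le (fun k ↦ one_div_nonneg.2 (intCast_sq_sub_pos hγ k.2).le) (fun k ↦ ?_)
    (((Real.summable_one_div_int_pow (p := 2)).2 one_lt_two).subtype {k | k ≠ 0} |>.mul_left
      (min 1 (1 - γ))⁻¹)
  simpa using one_div_sq_sub_le hγ le_rfl k.2

theorem resolventSum_nonneg {γ : ℝ} (hγ : γ < 1) : 0 ≤ resolventSum γ :=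
  tsum_nonneg fun k ↦ one_div_nonneg.2 (intCast_sq_sub_pos hγ k.2).le

theorem resolventSum_neg_sq_le {s : ℝ} (hs : 0 < s) : resolventSum (-s ^ 2) ≤ π / s := by
  have hsummable := summable_one_div_sq_sub (γ := -s ^ 2) (by nlinarith)
  have hnat : ∑' n : ℕ, 1 / (((n : ℝ) + 1) ^ 2 + s ^ 2) ≤ π / (2 * s) :=
    Real.tsum_le_of_sum_range_le (fun n ↦ by positivity) (sum_range_one_div_add_one_sq_add_sq_le hs)
  calc resolventSum (-s ^ 2)
      = 2 * ∑' n : ℕ, 1 / (((n : ℝ) + 1) ^ 2 + s ^ 2) := by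
        rw [resolventSum, tsum_int_ne_zero_of_even (f := fun k ↦ 1 / ((k : ℝ) ^ 2 - -s ^ 2))
          (fun k ↦ by simp) hsummable]
        simp
    _ ≤ 2 * (π / (2 * s)) := by gcongr
    _ = π / s := by field_simp

theorem sqrt_mul_resolventSum_le {β l : ℝ} (hβ : β < 1) (hl : 0 < l) :
    √l * resolventSum (β - l) ≤ (min 1 (1 - β))⁻¹ * π := by
  have hmin : 0 < min 1 (1 - β) := lt_min one_pos (sub_pos.2 hβ)
  have hcompare : resolventSum (β - l) ≤ (min 1 (1 - β))⁻¹ * resolventSum (-√l ^ 2) := by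
    simp only [resolventSum, ← tsum_mul_left]
    refine (summable_one_div_sq_sub (by linarith)).tsum_le_tsum (fun k ↦ ?_)
      ((summable_one_div_sq_sub (by linarith [sq_nonneg √l])).mul_left _)
    simpa [sq_sqrt hl.le] using one_div_sq_sub_le hβ hl.le k.2
  calc √l * resolventSum (β - l)
      ≤ √l * ((min 1 (1 - β))⁻¹ * (π / √l)) := by
        gcongr
        exact hcompare.trans (by gcongr; exact resolventSum_neg_sq_le (sqrt_pos.2 hl))
    _ = (min 1 (1 - β))⁻¹ * π := by field_simp

theorem K2_eq_iSup_resolventSum (β : ℝ) :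
    K2 β = ⨆ l : Set.Ioi (0 : ℝ), √l / π * resolventSum (β - l) := by
  simp only [K2, resolventSum, sub_add]

theorem K2_nonneg {β : ℝ} (hβ : β < 1) : 0 ≤ K2 β := by
  rw [K2_eq_iSup_resolventSum]
  refine Real.iSup_nonneg fun ⟨l, (hl : 0 < l)⟩ ↦ ?_
  have := resolventSum_nonneg (γ := β - l) (by linarith)
  positivity

theorem sqrt_mul_resolventSum_le_pi_mul_K2 {β l : ℝ} (hβ : β < 1) (hl : 0 < l) :
    √l * resolventSum (β - l) ≤ π * K2 β := by
  have hbdd : BddAbove (Set.range fun l : Set.Ioi (0 : ℝ) ↦ √l / π * resolventSum (β - l)) := by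
    refine ⟨(min 1 (1 - β))⁻¹ * π / π, ?_⟩
    rintro _ ⟨⟨l, hl⟩, rfl⟩
    dsimp only
    rw [div_mul_eq_mul_div, div_le_div_iff_of_pos_right pi_pos]
    exact sqrt_mul_resolventSum_le hβ hl
  rw [← div_le_iff₀' pi_pos, ← div_mul_eq_mul_div, K2_eq_iSup_resolventSum]
  exact le_ciSup hbdd ⟨l, hl⟩

/-! ### A Sobolev inequality for scalar periodic functions -/

section CauchySchwarz

variable {α : Type*} {r f g : α → ℝ}

theorem summable_of_sq_le_mul (hr : ∀ i, 0 ≤ r i) (hf0 : ∀ i, 0 ≤ f i) (hg0 : ∀ i, 0 ≤ g i)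
    (hle : ∀ i, r i ^ 2 ≤ f i * g i) (hf : Summable f) (hg : Summable g) : Summable r := by
  refine .of_nonneg_of_le hr (fun i ↦ ?_) (hf.add hg)
  refine le_of_sq_le_sq ?_ (add_nonneg (hf0 i) (hg0 i))
  nlinarith [hle i, mul_nonneg (hf0 i) (hg0 i), sq_nonneg (f i), sq_nonneg (g i)]

theorem sq_tsum_le_tsum_mul_tsum_of_sq_le_mul (hf0 : ∀ i, 0 ≤ f i)
    (hg0 : ∀ i, 0 ≤ g i) (hle : ∀ i, r i ^ 2 ≤ f i * g i) (hr : Summable r)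
    (hf : Summable f) (hg : Summable g) : (∑' i, r i) ^ 2 ≤ (∑' i, f i) * ∑' i, g i :=
  le_of_tendsto_of_tendsto' (hr.hasSum.pow 2) (Filter.Tendsto.mul hf.hasSum hg.hasSum) fun s ↦
    Finset.sum_sq_le_sum_mul_sum_of_sq_le_mul s (fun i _ ↦ hf0 i) (fun i _ ↦ hg0 i)
      fun i _ ↦ hle i

end CauchySchwarz

theorem fourierCoeff_lift_eq_fourierCoeffOn {T : ℝ} [hT : Fact (0 < T)] {f : ℝ → ℂ}
    (hper : f.Periodic T) (k : ℤ) : fourierCoeff hper.lift k = fourierCoeffOn hT.out f k := by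
  rw [fourierCoeff_eq_intervalIntegral _ _ 0, fourierCoeffOn_eq_integral]
  simp only [fourier_coe_apply, sub_zero, zero_add, Function.Periodic.lift_coe]

theorem norm_le_tsum_norm_fourierCoeffOn {T : ℝ} (hT : 0 < T) {f : ℝ → ℂ} (hf : Continuous f)
    (hper : f.Periodic T) (hsummable : Summable fun k ↦ ‖fourierCoeffOn hT f k‖) (y : ℝ) :
    ‖f y‖ ≤ ∑' k, ‖fourierCoeffOn hT f k‖ := by
  have : Fact (0 < T) := ⟨hT⟩
  let F : C(AddCircle T, ℂ) := ⟨hper.lift, continuous_coinduced_dom.2 hf⟩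
  have hcoeff : fourierCoeff F = fourierCoeffOn hT f :=
    funext (fourierCoeff_lift_eq_fourierCoeffOn hper)
  have hseries : HasSum (fun k ↦ fourierCoeff F k • fourier k (y : AddCircle T)) (f y) :=
    has_pointwise_sum_fourier_series_of_summable (hcoeff ▸ hsummable.of_norm) y
  refine hseries.norm_le_of_bounded hsummable.hasSum fun k ↦ ?_
  rw [hcoeff, norm_smul, fourier_apply, Circle.norm_coe, mul_one]

theorem fourierCoeffOn_zero {a b : ℝ} (hab : a < b) (f : ℝ → ℂ) :
    fourierCoeffOn hab f 0 = (1 / (b - a)) • ∫ x in a..b, f x := by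
  simp [fourierCoeffOn_eq_integral]

theorem fourierCoeffOn_deriv_of_eq_endpoints {a b : ℝ} (hab : a < b) {f f' : ℝ → ℂ}
    (hf : ∀ x ∈ Set.uIcc a b, HasDerivAt f (f' x) x) (hf' : IntervalIntegrable f' volume a b)
    (hend : f a = f b) (k : ℤ) :
    fourierCoeffOn hab f' k = 2 * π * Complex.I * k / (b - a) * fourierCoeffOn hab f k := by
  have hlen : ((b : ℂ) - a) ≠ 0 := by exact_mod_cast (sub_pos.2 hab).ne'
  rcases eq_or_ne k 0 with rfl | hk
  · simp [fourierCoeffOn_zero, intervalIntegral.integral_eq_sub_of_hasDerivAt hf hf', hend]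
  · have hk' : (k : ℂ) ≠ 0 := by exact_mod_cast hk
    have hpi : (π : ℂ) ≠ 0 := by exact_mod_cast pi_ne_zero
    rw [fourierCoeffOn_of_hasDerivAt hab hk hf hf', hend, sub_self, mul_zero, zero_sub]
    field_simp

theorem sq_le_mul_of_forall_two_mul_mul_le {F a b : ℝ} (hF : 0 ≤ F) (ha : 0 ≤ a) (hb : 0 ≤ b)
    (h : ∀ s > 0, 2 * s * F ≤ a + s ^ 2 * b) : F ^ 2 ≤ a * b := by
  have hquad (s : ℝ) : 0 ≤ b * (s * s) + -2 * F * s + a := by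
    rcases lt_or_ge 0 s with hs | hs
    · linarith [h s hs]
    · nlinarith [mul_nonneg hb (mul_self_nonneg s), mul_nonneg (neg_nonneg.2 hs) hF]
  have hdiscrim := discrim_le_zero hquad
  rw [discrim] at hdiscrim
  linarith

/-- The quadratic form of `-d²/dx² - β` on the period `[0, 2π]`, for a scalar function. -/
noncomputable def shiftedEnergy (β : ℝ) (f : ℝ → ℂ) : ℝ :=
  ∫ x in (0 : ℝ)..(2 * π), (‖deriv f x‖ ^ 2 - β * ‖f x‖ ^ 2)

theorem hasSum_sq_fourierCoeffOn_of_continuous {a b : ℝ} (hab : a < b) {f : ℝ → ℂ}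
    (hf : Continuous f) :
    HasSum (fun k ↦ ‖fourierCoeffOn hab f k‖ ^ 2) ((b - a)⁻¹ * ∫ x in a..b, ‖f x‖ ^ 2) :=
  hasSum_sq_fourierCoeffOn hab <| (memLp_two_iff_integrable_sq_norm hf.aestronglyMeasurable).2
    (Continuous.integrableOn_Ioc (by fun_prop))

section PeriodicSobolev

variable {f : ℝ → ℂ}

theorem shiftedEnergy_eq_sub (β : ℝ) (hf : ContDiff ℝ 1 f) :
    shiftedEnergy β f = (∫ x in (0 : ℝ)..(2 * π), ‖deriv f x‖ ^ 2) -
      β * ∫ x in (0 : ℝ)..(2 * π), ‖f x‖ ^ 2 := by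
  have := hf.continuous
  have := hf.continuous_deriv_one
  rw [shiftedEnergy, intervalIntegral.integral_sub (Continuous.intervalIntegrable (by fun_prop) _ _)
    (Continuous.intervalIntegrable (by fun_prop) _ _), intervalIntegral.integral_const_mul]

theorem sq_norm_fourierCoeffOn_deriv (hf : ContDiff ℝ 1 f) (hper : f.Periodic (2 * π)) (k : ℤ) :
    ‖fourierCoeffOn two_pi_pos (deriv f) k‖ ^ 2 = k ^ 2 * ‖fourierCoeffOn two_pi_pos f k‖ ^ 2 := by
  rw [fourierCoeffOn_deriv_of_eq_endpoints two_pi_pos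
    (fun x _ ↦ (hf.differentiable one_ne_zero x).hasDerivAt)
    (hf.continuous_deriv_one.intervalIntegrable _ _) hper.eq.symm]
  simp [mul_pow, abs_of_pos pi_pos]

theorem hasSum_sq_sub_mul_sq_fourierCoeffOn (γ : ℝ) (hf : ContDiff ℝ 1 f)
    (hper : f.Periodic (2 * π)) :
    HasSum (fun k : ℤ ↦ ((k : ℝ) ^ 2 - γ) * ‖fourierCoeffOn two_pi_pos f k‖ ^ 2)
      ((2 * π)⁻¹ * shiftedEnergy γ f) := by
  have hsum := (hasSum_sq_fourierCoeffOn_of_continuous two_pi_pos hf.continuous_deriv_one).sub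
    ((hasSum_sq_fourierCoeffOn_of_continuous two_pi_pos hf.continuous).mul_left γ)
  simp only [sq_norm_fourierCoeffOn_deriv hf hper, sub_zero, ← sub_mul] at hsum
  convert! hsum using 1
  rw [shiftedEnergy_eq_sub γ hf]
  ring

theorem hasSum_ne_zero_sq_sub_mul_sq_fourierCoeffOn (γ : ℝ) (hf : ContDiff ℝ 1 f)
    (hper : f.Periodic (2 * π)) (hmean : ∫ x in (0 : ℝ)..(2 * π), f x = 0) :
    HasSum (fun k : {k : ℤ // k ≠ 0} ↦
      ((k : ℝ) ^ 2 - γ) * ‖fourierCoeffOn two_pi_pos f k‖ ^ 2) ((2 * π)⁻¹ * shiftedEnergy γ f) := by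
  refine (hasSum_subtype_iff_of_support_subset (s := {k : ℤ | k ≠ 0}) ?_).2
    (hasSum_sq_sub_mul_sq_fourierCoeffOn γ hf hper)
  rw [Function.support_subset_iff']
  simp [fourierCoeffOn_zero, hmean]

theorem shiftedEnergy_nonneg {γ : ℝ} (hγ : γ ≤ 1) (hf : ContDiff ℝ 1 f) (hper : f.Periodic (2 * π))
    (hmean : ∫ x in (0 : ℝ)..(2 * π), f x = 0) : 0 ≤ shiftedEnergy γ f := by
  have hsum := hasSum_ne_zero_sq_sub_mul_sq_fourierCoeffOn γ hf hper hmean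
  refine nonneg_of_mul_nonneg_right (hsum.nonneg fun k ↦ ?_) (inv_pos.2 two_pi_pos)
  exact mul_nonneg (sub_nonneg.2 (hγ.trans (one_le_intCast_sq k.2))) (sq_nonneg _)

theorem two_pi_mul_sq_norm_le_resolventSum_mul_shiftedEnergy {γ : ℝ} (hγ : γ < 1)
    (hf : ContDiff ℝ 1 f) (hper : f.Periodic (2 * π))
    (hmean : ∫ x in (0 : ℝ)..(2 * π), f x = 0) (y : ℝ) :
    2 * π * ‖f y‖ ^ 2 ≤ resolventSum γ * shiftedEnergy γ f := by
  set c : ℤ → ℂ := fourierCoeffOn two_pi_pos f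
  have hpos (k : {k : ℤ // k ≠ 0}) : 0 < (k : ℝ) ^ 2 - γ := intCast_sq_sub_pos hγ k.2
  have hgreen := summable_one_div_sq_sub hγ
  have henergy := hasSum_ne_zero_sq_sub_mul_sq_fourierCoeffOn γ hf hper hmean
  have hgreen_nonneg (k : {k : ℤ // k ≠ 0}) : 0 ≤ 1 / ((k : ℝ) ^ 2 - γ) :=
    one_div_nonneg.2 (hpos k).le
  have henergy_nonneg (k : {k : ℤ // k ≠ 0}) : 0 ≤ ((k : ℝ) ^ 2 - γ) * ‖c k‖ ^ 2 :=
    mul_nonneg (hpos k).le (sq_nonneg _)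
  have hfactor (k : {k : ℤ // k ≠ 0}) :
      ‖c k‖ ^ 2 ≤ 1 / ((k : ℝ) ^ 2 - γ) * (((k : ℝ) ^ 2 - γ) * ‖c k‖ ^ 2) := by
    rw [← mul_assoc, one_div_mul_cancel (hpos k).ne', one_mul]
  have hsupport : Function.support (fun k ↦ ‖c k‖) ⊆ {k | k ≠ 0} := by
    rw [Function.support_subset_iff']
    simp [c, fourierCoeffOn_zero, hmean]
  have hsummable : Summable fun k : {k : ℤ // k ≠ 0} ↦ ‖c k‖ :=
    summable_of_sq_le_mul (fun _ ↦ norm_nonneg _) hgreen_nonneg henergy_nonneg hfactor hgreen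
      henergy.summable
  have hpointwise : ‖f y‖ ≤ ∑' k : {k : ℤ // k ≠ 0}, ‖c k‖ := by
    have hsum := (hasSum_subtype_iff_of_support_subset hsupport).1 hsummable.hasSum
    exact (norm_le_tsum_norm_fourierCoeffOn two_pi_pos hf.continuous hper hsum.summable y).trans_eq
      hsum.tsum_eq
  calc 2 * π * ‖f y‖ ^ 2 ≤ 2 * π * (∑' k : {k : ℤ // k ≠ 0}, ‖c k‖) ^ 2 := by gcongr
    _ ≤ 2 * π * (resolventSum γ * ((2 * π)⁻¹ * shiftedEnergy γ f)) := by
        rw [← henergy.tsum_eq]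
        gcongr
        exact sq_tsum_le_tsum_mul_tsum_of_sq_le_mul hgreen_nonneg henergy_nonneg hfactor hsummable
          hgreen henergy.summable
    _ = resolventSum γ * shiftedEnergy γ f := by field_simp

theorem sq_norm_sq_le_K2_sq_mul {β : ℝ} (hβ : β < 1) (hf : ContDiff ℝ 1 f)
    (hper : f.Periodic (2 * π)) (hmean : ∫ x in (0 : ℝ)..(2 * π), f x = 0) (y : ℝ) :
    (‖f y‖ ^ 2) ^ 2 ≤ K2 β ^ 2 * shiftedEnergy β f * ∫ x in (0 : ℝ)..(2 * π), ‖f x‖ ^ 2 := by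
  set E := shiftedEnergy β f
  set m := ∫ x in (0 : ℝ)..(2 * π), ‖f x‖ ^ 2
  have hK := K2_nonneg hβ
  have hE : 0 ≤ E := shiftedEnergy_nonneg hβ.le hf hper hmean
  have hm : 0 ≤ m := intervalIntegral.integral_nonneg two_pi_pos.le fun x _ ↦ sq_nonneg _
  have hshift (s : ℝ) : shiftedEnergy (β - s ^ 2) f = E + s ^ 2 * m := by
    simp only [E, m, shiftedEnergy_eq_sub _ hf]
    ring
  have hK2 (s : ℝ) (hs : 0 < s) : 2 * s * ‖f y‖ ^ 2 ≤ K2 β * E + s ^ 2 * (K2 β * m) := by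
    have hgreen := two_pi_mul_sq_norm_le_resolventSum_mul_shiftedEnergy (γ := β - s ^ 2)
      (by nlinarith) hf hper hmean y
    have hsup := sqrt_mul_resolventSum_le_pi_mul_K2 hβ (pow_pos hs 2)
    rw [sqrt_sq hs.le] at hsup
    rw [hshift] at hgreen
    refine le_of_mul_le_mul_left ?_ pi_pos
    calc π * (2 * s * ‖f y‖ ^ 2) = s * (2 * π * ‖f y‖ ^ 2) := by ring
      _ ≤ s * (resolventSum (β - s ^ 2) * (E + s ^ 2 * m)) := by gcongr
      _ = s * resolventSum (β - s ^ 2) * (E + s ^ 2 * m) := by ring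
      _ ≤ π * K2 β * (E + s ^ 2 * m) := by gcongr
      _ = π * (K2 β * E + s ^ 2 * (K2 β * m)) := by ring
  calc (‖f y‖ ^ 2) ^ 2 ≤ K2 β * E * (K2 β * m) :=
        sq_le_mul_of_forall_two_mul_mul_le (sq_nonneg _) (mul_nonneg hK hE) (mul_nonneg hK hm) hK2
    _ = K2 β ^ 2 * E * m := by ring

end PeriodicSobolev

/-! ### Trace inequality and matrix-valued functions -/

section MatrixValued

open scoped Matrix

section TraceInequality

open scoped ComplexOrder

variable {𝕜 n : Type*} [RCLike 𝕜] [Fintype n] [DecidableEq n]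

theorem trace_mul_eq_sum_eigenvalues_mul_s12 {R : Matrix n n 𝕜} (hR : R.IsHermitian)
    (B : Matrix n n 𝕜) :
    (R * B).trace = ∑ i, (hR.eigenvalues i : 𝕜) *
      (star ⇑(hR.eigenvectorBasis i) ⬝ᵥ B *ᵥ ⇑(hR.eigenvectorBasis i)) := by
  set V : Matrix n n 𝕜 := hR.eigenvectorUnitary.1
  set D : Matrix n n 𝕜 := Matrix.diagonal (RCLike.ofReal ∘ hR.eigenvalues) with hD
  have hspectral : R = V * D * star V := by
    conv_lhs => rw [hR.spectral_theorem, Unitary.conjStarAlgAut_apply]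
  calc (R * B).trace = (V * (D * (star V * B))).trace := by
        rw [hspectral]; simp only [mul_assoc]
    _ = (D * (star V * (B * V))).trace := by
        rw [Matrix.trace_mul_comm]; simp only [mul_assoc]
    _ = ∑ i, (hR.eigenvalues i : 𝕜) *
          (star ⇑(hR.eigenvectorBasis i) ⬝ᵥ B *ᵥ ⇑(hR.eigenvectorBasis i)) := by
        simp only [hD, Matrix.trace, Matrix.diag_apply, Matrix.diagonal_mul]
        rfl

theorem re_trace_pow_three_le_of_sq_quadForm_le {R A : Matrix n n 𝕜} (hR : R.PosSemidef)
    (h : ∀ ξ : n → 𝕜, star ξ ⬝ᵥ ξ = 1 →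
      RCLike.re (star ξ ⬝ᵥ R *ᵥ ξ) ^ 2 ≤ RCLike.re (star ξ ⬝ᵥ A *ᵥ ξ)) :
    RCLike.re (R ^ 3).trace ≤ RCLike.re (R * A).trace := by
  have hH := hR.isHermitian
  rw [pow_succ', trace_mul_eq_sum_eigenvalues_mul_s12 hH, trace_mul_eq_sum_eigenvalues_mul_s12 hH]
  simp only [map_sum, RCLike.re_ofReal_mul]
  refine Finset.sum_le_sum fun i _ ↦ mul_le_mul_of_nonneg_left ?_ (hR.eigenvalues_nonneg i)
  set v : n → 𝕜 := ⇑(hH.eigenvectorBasis i)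
  have hunit : star v ⬝ᵥ v = 1 := by
    rw [dotProduct_comm, ← EuclideanSpace.inner_eq_star_dotProduct, OrthonormalBasis.inner_eq_one]
  have heig : R *ᵥ v = hH.eigenvalues i • v := hH.mulVec_eigenvectorBasis i
  have hsq : RCLike.re (star v ⬝ᵥ R ^ 2 *ᵥ v) = RCLike.re (star v ⬝ᵥ R *ᵥ v) ^ 2 := by
    simp [pow_two, ← Matrix.mulVec_mulVec, heig, Matrix.mulVec_smul, hunit,
      RCLike.real_smul_eq_coe_mul]
  exact hsq.trans_le (h v hunit)

end TraceInequality

theorem trace_pow_succ_mul_comm {R m n : Type*} [CommSemiring R] [Fintype m] [Fintype n]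
    [DecidableEq m] [DecidableEq n] (A : Matrix m n R) (B : Matrix n m R) (k : ℕ) :
    ((A * B) ^ (k + 1)).trace = ((B * A) ^ (k + 1)).trace := by
  have hshift : (A * B) ^ (k + 1) = A * ((B * A) ^ k * B) := by
    induction k with
    | zero => simp
    | succ k ih => rw [pow_succ', ih, pow_succ']; simp only [Matrix.mul_assoc]
  rw [hshift, Matrix.trace_mul_comm, Matrix.mul_assoc, ← pow_succ]

theorem star_dotProduct_conjTranspose_mul_self_mulVec {𝕜 m n : Type*} [RCLike 𝕜] [Fintype m]
    [Fintype n] (P : Matrix m n 𝕜) (ξ : n → 𝕜) :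
    star ξ ⬝ᵥ (Pᴴ * P) *ᵥ ξ = ((∑ j, ‖(P *ᵥ ξ) j‖ ^ 2 : ℝ) : 𝕜) := by
  rw [← Matrix.mulVec_mulVec, Matrix.dotProduct_mulVec, ← Matrix.star_mulVec]
  simp [dotProduct, RCLike.conj_mul]

section LinearMapComp

variable {E G : Type*} [NormedAddCommGroup E] [NormedSpace ℝ E] [NormedSpace ℂ E]
  [FiniteDimensional ℂ E] [NormedAddCommGroup G] [NormedSpace ℝ G] [NormedSpace ℂ G]

theorem intervalIntegral_linearMap_comp [CompleteSpace G] (L : E →ₗ[ℂ] G) {F : ℝ → E}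
    (hF : Continuous F) (a b : ℝ) : ∫ x in a..b, L (F x) = L (∫ x in a..b, F x) :=
  have := FiniteDimensional.complete ℂ E
  L.toContinuousLinearMap.intervalIntegral_comp_comm (hF.intervalIntegrable a b)

theorem contDiff_linearMap_comp [IsScalarTower ℝ ℂ E] [IsScalarTower ℝ ℂ G] (L : E →ₗ[ℂ] G)
    {F : ℝ → E} {n : WithTop ℕ∞} (hF : ContDiff ℝ n F) : ContDiff ℝ n fun x ↦ L (F x) :=
  (L.toContinuousLinearMap.restrictScalars ℝ).contDiff.comp hF

theorem deriv_linearMap_comp [IsScalarTower ℝ ℂ E] [IsScalarTower ℝ ℂ G] (L : E →ₗ[ℂ] G)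
    {F : ℝ → E} {x : ℝ} (hF : DifferentiableAt ℝ F x) : deriv (fun t ↦ L (F t)) x = L (deriv F x) :=
  ((L.toContinuousLinearMap.restrictScalars ℝ).hasFDerivAt.comp_hasDerivAt x hF.hasDerivAt).deriv

end LinearMapComp

/-- The pairing `B ↦ uᵀ B v` as a linear functional of the matrix `B`. -/
def dotProductMulVec {m n : Type*} [Fintype m] [Fintype n] (u : m → ℂ) (v : n → ℂ) :
    Matrix m n ℂ →ₗ[ℂ] ℂ where
  toFun B := u ⬝ᵥ B *ᵥ v
  map_add' B C := by rw [Matrix.add_mulVec, dotProduct_add]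
  map_smul' c B := by rw [Matrix.smul_mulVec, dotProduct_smul, RingHom.id_apply]

section MatrixFunction

open scoped Matrix.Norms.Elementwise ComplexOrder

variable {ι κ : Type*} [Fintype ι] [Fintype κ] {Φ : ℝ → Matrix κ ι ℂ}

theorem dotProductMulVec_single_one [DecidableEq κ] (ξ : ι → ℂ) (j : κ) (B : Matrix κ ι ℂ) :
    dotProductMulVec (Pi.single j 1) ξ B = (B *ᵥ ξ) j :=
  single_one_dotProduct ..

theorem deriv_mulVec_apply {κ : Type*} [Finite κ] {Φ : ℝ → Matrix κ ι ℂ} {x : ℝ}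
    (hΦ : DifferentiableAt ℝ Φ x) (ξ : ι → ℂ) (j : κ) :
    deriv (fun t ↦ (Φ t *ᵥ ξ) j) x = (deriv Φ x *ᵥ ξ) j := by
  classical
  cases nonempty_fintype κ
  have h := deriv_linearMap_comp (dotProductMulVec (Pi.single j 1) ξ) hΦ
  simp only [dotProductMulVec_single_one] at h
  exact h

theorem contDiff_mulVec_apply {n : WithTop ℕ∞} (hΦ : ContDiff ℝ n Φ) (ξ : ι → ℂ) (j : κ) :
    ContDiff ℝ n fun t ↦ (Φ t *ᵥ ξ) j := by
  classical
  have h := contDiff_linearMap_comp (dotProductMulVec (Pi.single j 1) ξ) hΦ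
  simp only [dotProductMulVec_single_one] at h
  exact h

theorem intervalIntegral_mulVec_apply (hΦ : Continuous Φ) (ξ : ι → ℂ) (j : κ) (a b : ℝ) :
    ∫ x in a..b, (Φ x *ᵥ ξ) j = ((∫ x in a..b, Φ x) *ᵥ ξ) j := by
  classical
  have h := intervalIntegral_linearMap_comp (dotProductMulVec (Pi.single j 1) ξ) hΦ a b
  simp only [dotProductMulVec_single_one] at h
  exact h

theorem intervalIntegral_matrix_apply (hΦ : Continuous Φ) (j : κ) (n : ι) (a b : ℝ) :
    ∫ x in a..b, Φ x j n = (∫ x in a..b, Φ x) j n :=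
  intervalIntegral_linearMap_comp (Matrix.entryLinearMap ℂ ℂ j n) hΦ a b

/-- The Gram matrix, in `L²((0, 2π); ℂ^κ)`, of the columns of `Φ`. -/
noncomputable def gramMatrix (Φ : ℝ → Matrix κ ι ℂ) : Matrix ι ι ℂ :=
  ∫ x in (0 : ℝ)..(2 * π), (Φ x)ᴴ * Φ x

theorem gramMatrix_apply (hΦ : Continuous Φ) (m n : ι) :
    gramMatrix Φ m n = ∫ x in (0 : ℝ)..(2 * π), ∑ j, star (Φ x j m) * Φ x j n :=
  (intervalIntegral_matrix_apply (Φ := fun x ↦ (Φ x)ᴴ * Φ x) (by fun_prop) m n _ _).symm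

/-- The matrix, on the columns of `Φ`, of the sesquilinear form `∫ (⟨f', g'⟩ - β ⟨f, g⟩)` over the
period. -/
noncomputable def energyMatrix (β : ℝ) (Φ : ℝ → Matrix κ ι ℂ) : Matrix ι ι ℂ :=
  gramMatrix (deriv Φ) - (β : ℂ) • gramMatrix Φ

theorem star_dotProduct_gramMatrix_mulVec (hΦ : Continuous Φ) (ξ : ι → ℂ) :
    star ξ ⬝ᵥ gramMatrix Φ *ᵥ ξ =
      ((∑ j, ∫ x in (0 : ℝ)..(2 * π), ‖(Φ x *ᵥ ξ) j‖ ^ 2 : ℝ) : ℂ) := by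
  calc star ξ ⬝ᵥ gramMatrix Φ *ᵥ ξ
      = ∫ x in (0 : ℝ)..(2 * π), star ξ ⬝ᵥ ((Φ x)ᴴ * Φ x) *ᵥ ξ :=
        (intervalIntegral_linearMap_comp (dotProductMulVec (star ξ) ξ)
          (F := fun x ↦ (Φ x)ᴴ * Φ x) (by fun_prop) _ _).symm
    _ = ((∫ x in (0 : ℝ)..(2 * π), ∑ j, ‖(Φ x *ᵥ ξ) j‖ ^ 2 : ℝ) : ℂ) := by
        simp only [star_dotProduct_conjTranspose_mul_self_mulVec]
        exact intervalIntegral.integral_ofReal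
    _ = ((∑ j, ∫ x in (0 : ℝ)..(2 * π), ‖(Φ x *ᵥ ξ) j‖ ^ 2 : ℝ) : ℂ) := by
        rw [intervalIntegral.integral_finsetSum fun j _ ↦
          Continuous.intervalIntegrable (by fun_prop) _ _]

theorem re_star_dotProduct_energyMatrix_mulVec (β : ℝ) (hΦ : ContDiff ℝ 1 Φ) (ξ : ι → ℂ) :
    (star ξ ⬝ᵥ energyMatrix β Φ *ᵥ ξ).re = ∑ j, shiftedEnergy β fun x ↦ (Φ x *ᵥ ξ) j := by
  have hderiv : Continuous (deriv Φ) := hΦ.continuous_deriv_one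
  simp only [shiftedEnergy_eq_sub β (contDiff_mulVec_apply hΦ ξ _),
    deriv_mulVec_apply (hΦ.differentiable one_ne_zero _), Finset.sum_sub_distrib,
    ← Finset.mul_sum]
  rw [energyMatrix, Matrix.sub_mulVec, Matrix.smul_mulVec, dotProduct_sub, dotProduct_smul,
    star_dotProduct_gramMatrix_mulVec hderiv, star_dotProduct_gramMatrix_mulVec hΦ.continuous,
    smul_eq_mul, Complex.sub_re, Complex.re_ofReal_mul, Complex.ofReal_re, Complex.ofReal_re]

theorem re_trace_energyMatrix (β : ℝ) (hΦ : ContDiff ℝ 1 Φ) :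
    (energyMatrix β Φ).trace.re = ∑ n, ∑ j, shiftedEnergy β fun x ↦ Φ x j n := by
  classical
  rw [Matrix.trace, Complex.re_sum]
  refine Finset.sum_congr rfl fun n _ ↦ ?_
  have h := re_star_dotProduct_energyMatrix_mulVec β hΦ (Pi.single n 1)
  simp only [Pi.star_single, star_one, single_one_dotProduct, Matrix.mulVec_single_one,
    Matrix.col_apply] at h
  exact h

theorem integral_trace_conjTranspose_mul_self_mul (hΦ : Continuous Φ) (A : Matrix ι ι ℂ) :
    ∫ x in (0 : ℝ)..(2 * π), ((Φ x)ᴴ * Φ x * A).trace = (gramMatrix Φ * A).trace :=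
  intervalIntegral_linearMap_comp (Matrix.traceLinearMap ι ℂ ℂ ∘ₗ LinearMap.mulRight ℂ A)
    (F := fun x ↦ (Φ x)ᴴ * Φ x) (by fun_prop) _ _

theorem sq_sum_sq_norm_mulVec_le {β : ℝ} (hβ : β < 1) (hΦ : ContDiff ℝ 1 Φ)
    (hper : Φ.Periodic (2 * π)) (hmean : ∫ x in (0 : ℝ)..(2 * π), Φ x = 0) (ξ : ι → ℂ) (y : ℝ) :
    (∑ j, ‖(Φ y *ᵥ ξ) j‖ ^ 2) ^ 2 ≤ K2 β ^ 2 * (star ξ ⬝ᵥ energyMatrix β Φ *ᵥ ξ).re *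
      (star ξ ⬝ᵥ gramMatrix Φ *ᵥ ξ).re := by
  have hcomp (j : κ) : ContDiff ℝ 1 fun x ↦ (Φ x *ᵥ ξ) j := contDiff_mulVec_apply hΦ ξ j
  have hcomp_per (j : κ) : Function.Periodic (fun x ↦ (Φ x *ᵥ ξ) j) (2 * π) :=
    fun x ↦ by simp only [hper x]
  have hcomp_mean (j : κ) : ∫ x in (0 : ℝ)..(2 * π), (Φ x *ᵥ ξ) j = 0 := by
    rw [intervalIntegral_mulVec_apply hΦ.continuous, hmean, Matrix.zero_mulVec, Pi.zero_apply]
  rw [re_star_dotProduct_energyMatrix_mulVec β hΦ, star_dotProduct_gramMatrix_mulVec hΦ.continuous,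
    Complex.ofReal_re, Finset.mul_sum _ _ (K2 β ^ 2)]
  refine Finset.sum_sq_le_sum_mul_sum_of_sq_le_mul _ (fun j _ ↦ ?_) (fun j _ ↦ ?_) fun j _ ↦
    sq_norm_sq_le_K2_sq_mul hβ (hcomp j) (hcomp_per j) (hcomp_mean j) y
  · exact mul_nonneg (sq_nonneg _)
      (shiftedEnergy_nonneg hβ.le (hcomp j) (hcomp_per j) (hcomp_mean j))
  · exact intervalIntegral.integral_nonneg two_pi_pos.le fun x _ ↦ sq_nonneg _

theorem re_trace_mul_conjTranspose_self_pow_three_le [DecidableEq ι] [DecidableEq κ]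
    {β : ℝ} (hβ : β < 1) (hΦ : ContDiff ℝ 1 Φ) (hper : Φ.Periodic (2 * π))
    (hmean : ∫ x in (0 : ℝ)..(2 * π), Φ x = 0)
    (hgram : gramMatrix Φ = 1) (y : ℝ) :
    ((Φ y * (Φ y)ᴴ) ^ 3).trace.re ≤
      K2 β ^ 2 * ((Φ y)ᴴ * Φ y * energyMatrix β Φ).trace.re := by
  have h : (((Φ y)ᴴ * Φ y) ^ 3).trace.re ≤
      ((Φ y)ᴴ * Φ y * ((K2 β ^ 2 : ℝ) : ℂ) • energyMatrix β Φ).trace.re := by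
    refine re_trace_pow_three_le_of_sq_quadForm_le (𝕜 := ℂ)
      (Matrix.posSemidef_conjTranspose_mul_self _) fun ξ hξ ↦ ?_
    have hsobolev := sq_sum_sq_norm_mulVec_le hβ hΦ hper hmean ξ y
    rw [hgram, Matrix.one_mulVec, hξ, Complex.one_re, mul_one] at hsobolev
    rw [star_dotProduct_conjTranspose_mul_self_mulVec, Matrix.smul_mulVec, dotProduct_smul,
      smul_eq_mul, RCLike.ofReal_re]
    exact hsobolev.trans_eq (Complex.re_ofReal_mul _ _).symm
  rwa [Matrix.mul_smul, Matrix.trace_smul, smul_eq_mul, Complex.re_ofReal_mul,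
    trace_pow_succ_mul_comm] at h

theorem integral_re_trace_mul_conjTranspose_self_pow_three_le [DecidableEq ι] [DecidableEq κ]
    {β : ℝ} (hβ : β < 1) (hΦ : ContDiff ℝ 1 Φ) (hper : Φ.Periodic (2 * π))
    (hmean : ∫ x in (0 : ℝ)..(2 * π), Φ x = 0)
    (hgram : gramMatrix Φ = 1) :
    ∫ x in (0 : ℝ)..(2 * π), ((Φ x * (Φ x)ᴴ) ^ 3).trace.re ≤
      K2 β ^ 2 * ∑ n, ∑ j, shiftedEnergy β fun x ↦ Φ x j n := by
  have hcont := hΦ.continuous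
  have htrace : Continuous fun x ↦ ((Φ x)ᴴ * Φ x * energyMatrix β Φ).trace := by fun_prop
  calc ∫ x in (0 : ℝ)..(2 * π), ((Φ x * (Φ x)ᴴ) ^ 3).trace.re
      ≤ ∫ x in (0 : ℝ)..(2 * π), K2 β ^ 2 * ((Φ x)ᴴ * Φ x * energyMatrix β Φ).trace.re := by
        refine intervalIntegral.integral_mono two_pi_pos.le ?_ ?_
          (re_trace_mul_conjTranspose_self_pow_three_le hβ hΦ hper hmean hgram)
        all_goals exact Continuous.intervalIntegrable (by fun_prop) _ _
    _ = K2 β ^ 2 * (∫ x in (0 : ℝ)..(2 * π), ((Φ x)ᴴ * Φ x * energyMatrix β Φ).trace).re := by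
        rw [intervalIntegral.integral_const_mul]
        congr 1
        exact Complex.reCLM.intervalIntegral_comp_comm (htrace.intervalIntegrable _ _)
    _ = K2 β ^ 2 * ∑ n, ∑ j, shiftedEnergy β fun x ↦ Φ x j n := by
        rw [integral_trace_conjTranspose_mul_self_mul hcont, hgram, one_mul,
          re_trace_energyMatrix β hΦ]

theorem stmt_12_general [DecidableEq ι] [DecidableEq κ] {β : ℝ} (hβ : β < 1)
    (φ : ι → ℝ → κ → ℂ) (hφ : ∀ n, ContDiff ℝ 1 (φ n))
    (hper : ∀ n, Function.Periodic (φ n) (2 * π))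
    (hmean : ∀ n j, (∫ x in (0 : ℝ)..(2 * π), φ n x j) = 0)
    (hortho : ∀ n m, (∫ x in (0 : ℝ)..(2 * π), ∑ j, φ n x j * (starRingEnd ℂ) (φ m x j)) =
      if n = m then 1 else 0)
    (U : ℝ → Matrix κ κ ℂ)
    (hU : ∀ x, U x = Matrix.of fun j k ↦ ∑ n, φ n x j * (starRingEnd ℂ) (φ n x k)) :
    (∫ x in (0 : ℝ)..(2 * π), ((U x ^ 3).trace).re) ≤
      K2 β ^ 2 * ∑ n, ∑ j, ∫ x in (0 : ℝ)..(2 * π),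
        (‖deriv (fun t ↦ φ n t j) x‖ ^ 2 - β * ‖φ n x j‖ ^ 2) := by
  let Φ : ℝ → Matrix κ ι ℂ := fun x ↦ Matrix.of fun j n ↦ φ n x j
  have hΦ : ContDiff ℝ 1 Φ :=
    contDiff_pi.2 fun j ↦ contDiff_pi.2 fun n ↦ contDiff_pi.1 (hφ n) j
  have hΦ_per : Φ.Periodic (2 * π) := fun x ↦ by ext j n; exact congrFun (hper n x) j
  have hΦ_mean : ∫ x in (0 : ℝ)..(2 * π), Φ x = 0 := by
    ext j n
    rw [← intervalIntegral_matrix_apply hΦ.continuous]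
    exact hmean n j
  have hΦ_gram : gramMatrix Φ = 1 := by
    ext m n
    rw [gramMatrix_apply hΦ.continuous, Matrix.one_apply]
    simpa only [eq_comm, mul_comm] using! hortho n m
  have hUΦ (x : ℝ) : U x = Φ x * (Φ x)ᴴ := by
    rw [hU]
    rfl
  simpa only [hUΦ] using!
    integral_re_trace_mul_conjTranspose_self_pow_three_le hβ hΦ hΦ_per hΦ_mean hΦ_gram

end MatrixFunction

end MatrixValued

theorem stmt_12 (β : ℝ) (hβ0 : 0 ≤ β) (hβ1 : β < 1)
    (M N : ℕ) (hM : 1 ≤ M) (hN : 1 ≤ N)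
    (φ : Fin N → ℝ → Fin M → ℂ) (hφ : ∀ n, ContDiff ℝ 1 (φ n))
    (hper : ∀ n, Function.Periodic (φ n) (2 * π))
    (hmean : ∀ n j, (∫ x in (0:ℝ)..(2 * π), φ n x j) = 0)
    (hortho : ∀ n m, (∫ x in (0:ℝ)..(2 * π), ∑ j, φ n x j * (starRingEnd ℂ) (φ m x j)) =
      if n = m then 1 else 0)
    (U : ℝ → Matrix (Fin M) (Fin M) ℂ)
    (hU : ∀ x, U x = Matrix.of fun j k => ∑ n, φ n x j * (starRingEnd ℂ) (φ n x k)) :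
    (∫ x in (0:ℝ)..(2 * π), ((U x ^ 3).trace).re) ≤
      K2 β ^ 2 * ∑ n, ∑ j, ∫ x in (0:ℝ)..(2 * π),
        (‖deriv (fun t => φ n t j) x‖ ^ 2 - β * ‖φ n x j‖ ^ 2) :=
  stmt_12_general hβ1 φ hφ hper hmean hortho U hU
end
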